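/- For every natural number n ≥ 2 there exists a constant C > 0 such that for every finite field F, writing q = |F| and G = SL_n(F), there exist elements x₁, x₂ ∈ G with x₁ of order (qⁿ−1)/(q−1) and x₂ of order q^{n−1}−1 such that the number of y ∈ G for which {x₁, y} invariably generates G or {x₂, y} invariably generates G is at least (1 − C/q) · |G|. -/

import Mathlib

/-- `{x, y}` invariably generates `G`: for all `g, h`, the conjugates
`g * x * g⁻¹` and `h * y * h⁻¹` generate `G`. -/
def InvGen {G : Type*} [Group G] (x y : G) : Prop :=
  ∀ g h : G, Subgroup.closure {g * x * g⁻¹, h * y * h⁻¹} = ⊤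


open Matrix in
lemma p1_diag_mem {n : ℕ} {F : Type} [Field F]
    (N : Subgroup (SpecialLinearGroup (Fin n) F))
    (hN : ∀ (i j : Fin n) (hij : i ≠ j) (a : F), SpecialLinearGroup.transvection hij a ∈ N)
    (i j : Fin n) (hij : i ≠ j) (a : F) (ha : a ≠ 0) :
    SpecialLinearGroup.diag2n hij a ha ∈ N := by
  have key : SpecialLinearGroup.diag2n hij a ha =
      SpecialLinearGroup.transvection hij a * SpecialLinearGroup.transvection hij.symm (-a⁻¹) *
      SpecialLinearGroup.transvection hij a * (SpecialLinearGroup.transvection hij (-1) *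
      SpecialLinearGroup.transvection hij.symm 1 * SpecialLinearGroup.transvection hij (-1)) := by
    apply SpecialLinearGroup.coeMonoidHom_injective
    simp only [map_mul, SpecialLinearGroup.coeMonoidHom_apply]
    have h1 : (1 + single i j a) * (1 + single j i (-a⁻¹)) * (1 + single i j a)
        = 1 - single i i 1 - single j j 1 + single i j a + single j i (-a⁻¹) := by
      simp only [add_mul, mul_add, one_mul, mul_one, single_mul_single_same, 
        single_mul_single_of_ne _ _ _ _ hij, single_mul_single_of_ne _ _ _ _ hij.symm,
        add_zero, zero_mul, mul_zero, mul_neg, neg_mul, mul_inv_cancel₀ ha, inv_mul_cancel₀ ha]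
      simp only [← single_neg]
      abel
    have h2 : (1 + single i j (-1:F)) * (1 + single j i 1) * (1 + single i j (-1))
        = 1 - single i i 1 - single j j 1 + single i j (-1) + single j i 1 := by
      simp only [add_mul, mul_add, one_mul, mul_one, single_mul_single_same, 
        single_mul_single_of_ne _ _ _ _ hij, single_mul_single_of_ne _ _ _ _ hij.symm,
        add_zero, zero_mul, mul_zero, mul_neg, neg_mul]
      simp only [← single_neg, neg_neg]
      abel
    simp only [SpecialLinearGroup.coe_mul, SpecialLinearGroup.transvection_coe,
      SpecialLinearGroup.diag2n_coe, h1, h2]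
    simp only [add_mul, mul_add, sub_mul, mul_sub, one_mul, mul_one, single_mul_single_same, 
        single_mul_single_of_ne _ _ _ _ hij, single_mul_single_of_ne _ _ _ _ hij.symm,
        add_zero, zero_add, zero_mul, mul_zero, mul_neg, neg_mul, sub_zero]
    ext k l
    by_cases hkl : k = l
    · subst hkl
      by_cases h1 : k = i
      · subst h1; simp [hij, hij.symm, single_apply]
      · by_cases h2 : k = j
        · subst h2; simp [hij, hij.symm, single_apply]
        · simp [h1, h2, single_apply, Ne.symm h1, Ne.symm h2, eq_comm]
    · simp only [diagonal_apply_ne _ hkl, Matrix.add_apply, Matrix.sub_apply, one_apply_ne hkl, single_apply]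
      grind
  rw [key]
  have := hN i j hij
  have h' := hN j i hij.symm
  exact N.mul_mem (N.mul_mem (N.mul_mem (this _) (h' _)) (this _))
    (N.mul_mem (N.mul_mem (this _) (h' _)) (this _))

open Matrix in
lemma p1_conj {n : ℕ} {F : Type} [Field F] (i j : Fin n) (hij : i ≠ j) (s : F) (hs : s ≠ 0) (t : F) :
    SpecialLinearGroup.diag2n hij s hs * SpecialLinearGroup.transvection hij t *
      (SpecialLinearGroup.diag2n hij s hs)⁻¹ = SpecialLinearGroup.transvection hij (s ^ 2 * t) := by
  rw [mul_inv_eq_iff_eq_mul]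
  apply SpecialLinearGroup.coeMonoidHom_injective
  simp only [map_mul, SpecialLinearGroup.coeMonoidHom_apply]
  simp only [SpecialLinearGroup.coe_mul, SpecialLinearGroup.transvection_coe,
      SpecialLinearGroup.diag2n_coe, mul_add, add_mul, one_mul, mul_one]
  congr 1
  ext k l
  simp only [diagonal_mul, mul_diagonal, single_apply]
  by_cases h : i = k ∧ j = l
  · obtain ⟨rfl, rfl⟩ := h
    simp [hij.symm]
    field_simp
  · simp [h]

lemma p1_sq {F : Type} [Field F] [Fintype F] (A : AddSubgroup F)
    (hA : ∀ s : F, s ≠ 0 → ∀ t ∈ A, s ^ 2 * t ∈ A) (h0 : ∃ t ∈ A, t ≠ 0) : A = ⊤ := by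
  obtain ⟨t, htA, ht⟩ := h0
  have hA' : ∀ s : F, ∀ t ∈ A, s ^ 2 * t ∈ A := by
    intro s t ht
    by_cases hs : s = 0
    · subst hs; simp
    · exact hA s hs t ht
  rw [eq_top_iff]
  intro u _
  by_cases h2 : (2 : F) = 0
  · have : CharP F 2 := by
      have := CharTwo.of_one_ne_zero_of_two_eq_zero (one_ne_zero (α := F)) h2
      exact this
    obtain ⟨s, hs⟩ := FiniteField.isSquare_of_char_two (ringChar.eq_iff.mpr this) (u / t)
    have := hA' s t htA
    rwa [sq, ← hs, div_mul_cancel₀ _ ht] at this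
  · have := A.sub_mem (hA' ((u / t + 1) / 2) t htA) (hA' ((u / t - 1) / 2) t htA)
    convert this using 1
    field_simp
    ring

open Matrix in
lemma p1_main {n : ℕ} (hn : 2 ≤ n) {F : Type} [Field F] [Fintype F]
    (H : Subgroup (SpecialLinearGroup (Fin n) F)) (K : ℕ) (hK : H.index ≤ K)
    (hq : K.factorial < Fintype.card F) : H = ⊤ := by
  haveI : Nontrivial (Fin n) := Fin.nontrivial_iff_two_le.mpr hn
  set N := H.normalCore with hNdef
  have hNi : N.index ≤ K.factorial := by
    have : N.index = Nat.card (MulAction.toPermHom (SpecialLinearGroup (Fin n) F)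
      (SpecialLinearGroup (Fin n) F ⧸ H)).range := by
      rw [hNdef, Subgroup.normalCore_eq_ker, Subgroup.index_ker]
    rw [this]
    refine (Subgroup.card_le_card_group _).trans ?_
    rw [Nat.card_perm]
    exact Nat.factorial_le hK
  have hNN : N = ⊤ := by
    have htr : ∀ (i j : Fin n) (hij : i ≠ j) (a : F),
        SpecialLinearGroup.transvection hij a ∈ N := by
      intro i j hij
      let A : AddSubgroup F :=
        { carrier := {t | SpecialLinearGroup.transvection hij t ∈ N}
          zero_mem' := by simp [SpecialLinearGroup.transvection_coeff_zero, N.one_mem]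
          add_mem' := by
            intro a b ha hb
            simp only [Set.mem_setOf_eq, SpecialLinearGroup.transvection_add] at *
            exact N.mul_mem ha hb
          neg_mem' := by
            intro a ha
            simp only [Set.mem_setOf_eq, ← SpecialLinearGroup.transvection_inv] at *
            exact N.inv_mem ha }
      have hA : A = ⊤ := by
        apply p1_sq
        · intro s hs t ht
          change _ ∈ N
          rw [← p1_conj i j hij s hs]
          exact Subgroup.Normal.conj_mem inferInstance _ ht _
        · by_contra hcon
          push Not at hcon
          have hinj : Function.Injective (fun t : F =>
              (QuotientGroup.mk (SpecialLinearGroup.transvection hij t) :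
                SpecialLinearGroup (Fin n) F ⧸ N)) := by
            intro a b hab
            simp only [QuotientGroup.eq, SpecialLinearGroup.transvection_inv,
              ← SpecialLinearGroup.transvection_add] at hab
            have := hcon _ hab
            linear_combination -this
          have h1 := Nat.card_le_card_of_injective _ hinj
          have h2 : Nat.card (SpecialLinearGroup (Fin n) F ⧸ N) = N.index := rfl
          rw [h2, Nat.card_eq_fintype_card] at h1
          omega
      intro a
      have : a ∈ A := hA ▸ AddSubgroup.mem_top a
      exact this
    rw [eq_top_iff]
    intro M _
    refine SpecialLinearGroup.diagonal_transvection_induction' (fun M => M ∈ N) M ?_ htr ?_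
    · intro i j hij c hc; exact p1_diag_mem N htr i j hij c hc
    · intro A B hA hB; exact N.mul_mem hA hB
  rw [eq_top_iff, ← hNN]
  exact Subgroup.normalCore_le H

open Matrix in
/-- evaluation of a polynomial in matrix entries -/
noncomputable def mev {n : ℕ} {K : Type} [CommRing K] (P : MvPolynomial (Fin n × Fin n) K)
    (Z : Matrix (Fin n) (Fin n) K) : K := MvPolynomial.eval (fun ij => Z ij.1 ij.2) P

lemma p2_curve {n : ℕ} {K : Type} [Field K]
    (M : Submonoid (Matrix (Fin n) (Fin n) K))
    (X : Matrix (Fin n) (Fin n) K)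
    (hX : X ∈ Submodule.span K {p : Matrix (Fin n) (Fin n) K | ∀ t : K, 1 + t • p ∈ M}) :
    ∃ Y : Matrix (Fin n) (Fin n) (Polynomial K), Y.map (Polynomial.eval 0) = X ∧
      ∀ s : K, 1 + s • Y.map (Polynomial.eval s) ∈ M := by
  induction hX using Submodule.span_induction with
  | mem p hp =>
    refine ⟨p.map Polynomial.C, ?_, ?_⟩
    · ext; simp
    · intro s
      have : (p.map Polynomial.C).map (Polynomial.eval s) = p := by ext; simp
      rw [this]; exact hp s
  | zero =>
    refine ⟨0, ?_, ?_⟩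
    · ext; simp
    · intro s
      have : ((0 : Matrix (Fin n) (Fin n) (Polynomial K))).map (Polynomial.eval s) = 0 := by
        ext; simp
      rw [this]; simp
  | add a b _ _ ha hb =>
    obtain ⟨Y, hY, hYM⟩ := ha
    obtain ⟨Z, hZ, hZM⟩ := hb
    have hm : ∀ s : K, (Y + Z + (Polynomial.X : Polynomial K) • (Y * Z)).map (Polynomial.eval s)
        = Y.map (Polynomial.eval s) + Z.map (Polynomial.eval s) + s • (Y.map (Polynomial.eval s) * Z.map (Polynomial.eval s)) := by
      intro s
      ext i j
      simp [Matrix.mul_apply, Polynomial.eval_finset_sum]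
    refine ⟨Y + Z + (Polynomial.X : Polynomial K) • (Y * Z), ?_, ?_⟩
    · rw [hm, hY, hZ]; simp
    · intro s
      have := M.mul_mem (hYM s) (hZM s)
      rw [hm]
      convert this using 1
      simp only [mul_add, add_mul, one_mul, mul_one, smul_add, smul_mul_assoc, mul_smul_comm]
      abel
  | smul t a _ ha =>
    obtain ⟨Y, hY, hYM⟩ := ha
    have hm : ∀ s : K, (t • Y.map (fun f => f.comp (Polynomial.C t * Polynomial.X))).map
        (Polynomial.eval s) = t • Y.map (Polynomial.eval (t * s)) := by
      intro s
      ext i j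
      simp
    refine ⟨t • Y.map (fun f => f.comp (Polynomial.C t * Polynomial.X)), ?_, ?_⟩
    · rw [hm]; simp [hY]
    · intro s
      rw [hm, smul_smul, mul_comm s t]
      exact hYM _

lemma p2_hom {σ : Type} {K : Type} [Field K] (R : MvPolynomial σ K) (j : ℕ) (hR : R.IsHomogeneous j)
    (Y : σ → Polynomial K) :
    MvPolynomial.aeval (fun i => Polynomial.X * Y i) R = Polynomial.X ^ j * MvPolynomial.aeval Y R := by
  rw [MvPolynomial.aeval_def, MvPolynomial.aeval_def, MvPolynomial.eval₂_eq, MvPolynomial.eval₂_eq, Finset.mul_sum]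
  refine Finset.sum_congr rfl fun d hd => ?_
  have hd' := hR (MvPolynomial.mem_support_iff.mp hd)
  have : d.sum (fun _ k => k) = j := by
    rw [← hd']; simp [Finsupp.weight_apply]
  simp only [mul_pow, Finset.prod_mul_distrib, Finset.prod_pow_eq_pow_sum]
  rw [Finsupp.sum] at this
  rw [this]; ring

lemma p2_dense {n : ℕ} {K : Type} [Field K] [Infinite K]
    (M : Submonoid (Matrix (Fin n) (Fin n) K))
    (hM : Submodule.span K {p : Matrix (Fin n) (Fin n) K | ∀ t : K, 1 + t • p ∈ M} = ⊤)
    (P : MvPolynomial (Fin n × Fin n) K) (hP : ∀ Z ∈ M, mev P Z = 0) : ∀ Z, mev P Z = 0 := by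
  let R : MvPolynomial (Fin n × Fin n) K := MvPolynomial.aeval
    (fun ij => MvPolynomial.X ij + MvPolynomial.C ((1 : Matrix (Fin n) (Fin n) K) ij.1 ij.2)) P
  have hR : ∀ Z, mev R Z = mev P (1 + Z) := by
    intro Z
    simp only [mev, R]
    rw [← MvPolynomial.coe_aeval_eq_eval, ← MvPolynomial.coe_aeval_eq_eval]
    simp only [RingHom.coe_coe]
    rw [← AlgHom.comp_apply, MvPolynomial.comp_aeval]
    congr 2
    ext ij
    simp [add_comm]
  have hcomp : ∀ j, MvPolynomial.homogeneousComponent j R = 0 := by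
    intro j
    induction j using Nat.strong_induction_on with
    | _ j ih =>
    apply MvPolynomial.funext
    intro x
    rw [map_zero]
    obtain ⟨Y, hY, hYM⟩ := p2_curve M (Matrix.of fun a b => x (a, b)) (by rw [hM]; trivial)
    have hQ : MvPolynomial.aeval (fun ij : Fin n × Fin n => Polynomial.X * Y ij.1 ij.2) R = 0 := by
      apply Polynomial.funext
      intro s
      have := hP _ (hYM s)
      rw [← hR] at this
      rw [Polynomial.eval_zero, ← this, mev]
      rw [← Polynomial.coe_evalRingHom, MvPolynomial.aeval_def, MvPolynomial.hom_eval₂, MvPolynomial.eval, MvPolynomial.coe_eval₂Hom]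
      congr 1
      · ext; simp
      · ext; simp
    rw [← MvPolynomial.sum_homogeneousComponent R, map_sum] at hQ
    have hdeg : ∀ i, MvPolynomial.aeval (fun ij : Fin n × Fin n => Polynomial.X * Y ij.1 ij.2)
        (MvPolynomial.homogeneousComponent i R) = Polynomial.X ^ i *
        MvPolynomial.aeval (fun ij : Fin n × Fin n => Y ij.1 ij.2) (MvPolynomial.homogeneousComponent i R) := by
      intro i
      exact p2_hom _ i (MvPolynomial.homogeneousComponent_isHomogeneous i R) _
    simp only [hdeg] at hQ
    by_cases hj : R.totalDegree < j
    · rw [MvPolynomial.homogeneousComponent_eq_zero _ _ hj, map_zero]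
    have hc := congrArg (fun f => Polynomial.coeff f j) hQ
    simp only [Polynomial.finsetSum_coeff, Polynomial.coeff_zero] at hc
    rw [Finset.sum_eq_single j] at hc
    · rw [Polynomial.coeff_X_pow_mul', if_pos le_rfl, Nat.sub_self, Polynomial.coeff_zero_eq_eval_zero,
        ← Polynomial.coe_evalRingHom, MvPolynomial.aeval_def, MvPolynomial.hom_eval₂] at hc
      rw [MvPolynomial.eval, MvPolynomial.coe_eval₂Hom]
      have hx : x = fun i => (Polynomial.evalRingHom 0) (Y i.1 i.2) := by
        funext ij
        have := congrFun (congrFun hY ij.1) ij.2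
        simp at this
        simp [this]
      have hid : (Polynomial.evalRingHom 0).comp (algebraMap K (Polynomial K)) = RingHom.id K := by
        ext; simp
      rw [hid] at hc
      rw [hx]
      exact hc
    · intro i _ hij
      rcases lt_or_gt_of_ne hij with h | h
      · simp [ih i h]
      · rw [Polynomial.coeff_X_pow_mul']
        simp [h]
    · intro h
      simp at h
      omega
  have hR0 : R = 0 := by
    rw [← MvPolynomial.sum_homogeneousComponent R]
    exact Finset.sum_eq_zero fun i _ => hcomp i
  intro Z
  have := hR (Z - 1)
  rw [hR0] at this
  simpa [mev] using this.symm

/-- walks of exact length -/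
def Wk {n : ℕ} (G : Fin n → Fin n → Prop) : ℕ → Fin n → Fin n → Prop
  | 0, a, b => a = b
  | r + 1, a, b => ∃ c, G a c ∧ Wk G r c b

lemma Wk_trans {n : ℕ} {G : Fin n → Fin n → Prop} : ∀ (r s : ℕ) (a b c : Fin n),
    Wk G r a b → Wk G s b c → Wk G (r + s) a c := by
  intro r
  induction r with
  | zero => intro s a b c h1 h2; simp only [Wk] at h1; subst h1; simpa using h2
  | succ r ih =>
    intro s a b c h1 h2
    obtain ⟨e, he, h⟩ := h1
    rw [show r + 1 + s = (r + s) + 1 by ring]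
    exact ⟨e, he, ih s e b c h h2⟩

lemma Wk_full {n : ℕ} {G : Fin n → Fin n → Prop}
    (hc : ∀ a b, Relation.ReflTransGen G a b) (i : Fin n) (hi : G i i) :
    ∃ r, ∀ a b, Wk G r a b := by
  have h1 : ∀ a b, ∃ r, Wk G r a b := by
    intro a b
    induction hc a b using Relation.ReflTransGen.head_induction_on with
    | refl => exact ⟨0, rfl⟩
    | head h _ ih =>
      obtain ⟨r, hr⟩ := ih
      exact ⟨r + 1, _, h, hr⟩
  have hl : ∀ k, Wk G k i i := by
    intro k
    induction k with
    | zero => rfl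
    | succ k ih => exact ⟨i, hi, ih⟩
  choose f hf using h1
  refine ⟨(∑ a, f a i) + (∑ b, f i b), fun a b => ?_⟩
  have ha : f a i ≤ ∑ a, f a i := Finset.single_le_sum (f := fun a => f a i) (fun _ _ => Nat.zero_le _) (Finset.mem_univ a)
  have hb : f i b ≤ ∑ b, f i b := Finset.single_le_sum (f := fun a => f i a) (fun _ _ => Nat.zero_le _) (Finset.mem_univ b)
  apply Wk_trans _ _ a i b
  · have := Wk_trans _ _ _ _ _ (hf a i) (hl (∑ a, f a i - f a i))
    rwa [Nat.add_sub_cancel' ha] at this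
  · have := Wk_trans _ _ _ _ _ (hl (∑ b, f i b - f i b)) (hf i b)
    rwa [Nat.sub_add_cancel hb] at this

lemma p3_generic {n : ℕ} {K : Type} [Field K] [Infinite K] (w w' : Matrix (Fin n) (Fin n) K) :
    ∃ d : Fin n → K, (∀ i, d i ≠ 0) ∧ ∀ a b, (∃ i, w a i ≠ 0 ∧ w' i b ≠ 0) →
      (w * Matrix.diagonal d * w') a b ≠ 0 := by
  classical
  let L : Fin n → Fin n → MvPolynomial (Fin n) K := fun a b =>
    ∑ i, MvPolynomial.C (w a i * w' i b) * MvPolynomial.X i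
  have hL : ∀ a b d, MvPolynomial.eval d (L a b) = (w * Matrix.diagonal d * w') a b := by
    intro a b d
    rw [Matrix.mul_apply]
    simp only [L, map_sum, map_mul, MvPolynomial.eval_C, MvPolynomial.eval_X,
      Matrix.mul_diagonal]
    refine Finset.sum_congr rfl fun i _ => by ring
  let Q : MvPolynomial (Fin n) K := (∏ i, MvPolynomial.X i) *
    ∏ a, ∏ b, if L a b = 0 then 1 else L a b
  have hQ : Q ≠ 0 := by
    refine mul_ne_zero (Finset.prod_ne_zero_iff.mpr fun i _ => MvPolynomial.X_ne_zero i) ?_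
    refine Finset.prod_ne_zero_iff.mpr fun a _ => Finset.prod_ne_zero_iff.mpr fun b _ => ?_
    split_ifs with h
    · exact one_ne_zero
    · exact h
  obtain ⟨d, hd⟩ : ∃ d, MvPolynomial.eval d Q ≠ 0 := by
    by_contra hcon
    push Not at hcon
    exact hQ (MvPolynomial.funext fun x => by rw [hcon, map_zero])
  simp only [Q, map_mul, map_prod, MvPolynomial.eval_X] at hd
  have hd1 := left_ne_zero_of_mul hd
  have hd2 := right_ne_zero_of_mul hd
  rw [Finset.prod_ne_zero_iff] at hd1 hd2
  refine ⟨d, fun i => hd1 i (Finset.mem_univ i), ?_⟩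
  rintro a b ⟨i, h1, h2⟩
  have hLab : L a b ≠ 0 := by
    intro h
    have := hL a b (Pi.single i 1)
    rw [h, map_zero] at this
    rw [Matrix.mul_apply] at this
    simp only [Matrix.mul_diagonal, Pi.single_apply] at this
    simp [h1, h2] at this
  have := hd2 a (Finset.mem_univ a)
  rw [Finset.prod_ne_zero_iff] at this
  have := this b (Finset.mem_univ b)
  rw [if_neg hLab, hL] at this
  exact this

lemma p3_word {n : ℕ} {K : Type} [Field K] [Infinite K]
    (M : Submonoid (Matrix (Fin n) (Fin n) K)) (hD : ∀ d, Matrix.diagonal d ∈ M)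
    (y y' : Matrix (Fin n) (Fin n) K) (hy : y ∈ M) (hy' : y' ∈ M) (hyy : y * y' = 1) (r : ℕ) :
    ∃ w w', w ∈ M ∧ w' ∈ M ∧ w * w' = 1 ∧ ∀ a b, Wk (fun a b => y a b ≠ 0) r a b → w a b ≠ 0 := by
  induction r with
  | zero =>
    refine ⟨1, 1, M.one_mem, M.one_mem, one_mul _, ?_⟩
    intro a b h
    simp only [Wk] at h
    subst h; simp
  | succ r ih =>
    obtain ⟨w, w', hw, hw', h1, h⟩ := ih
    obtain ⟨d, hd, hdd⟩ := p3_generic y w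
    refine ⟨y * Matrix.diagonal d * w, w' * Matrix.diagonal (fun i => (d i)⁻¹) * y',
      M.mul_mem (M.mul_mem hy (hD _)) hw, M.mul_mem (M.mul_mem hw' (hD _)) hy', ?_, ?_⟩
    · have h2 : Matrix.diagonal d * Matrix.diagonal (fun i => (d i)⁻¹) = 1 := by
        rw [Matrix.diagonal_mul_diagonal]
        simp [hd]
      calc _ = y * (Matrix.diagonal d * (w * w') * Matrix.diagonal (fun i => (d i)⁻¹)) * y' := by
            simp only [mul_assoc]
        _ = 1 := by rw [h1, mul_one, h2, mul_one, hyy]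
    · rintro a b ⟨c, hc, hcb⟩
      exact hdd a b ⟨c, hc, h c b hcb⟩

lemma p3_span {n : ℕ} {K : Type} [Field K] [Infinite K]
    (M : Submonoid (Matrix (Fin n) (Fin n) K)) (hD : ∀ d, Matrix.diagonal d ∈ M)
    (w w' : Matrix (Fin n) (Fin n) K) (hw : w ∈ M) (hw' : w' ∈ M) (hww : w * w' = 1)
    (hnz : ∀ a b, w a b ≠ 0) :
    Submodule.span K {p : Matrix (Fin n) (Fin n) K | ∀ t : K, 1 + t • p ∈ M} = ⊤ := by
  classical
  set S := Submodule.span K {p : Matrix (Fin n) (Fin n) K | ∀ t : K, 1 + t • p ∈ M} with hS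
  have hconj : ∀ p ∈ S, ∀ d : Fin n → K, (∀ i, d i ≠ 0) →
      Matrix.diagonal d * p * Matrix.diagonal (fun i => (d i)⁻¹) ∈ S := by
    intro p hp d hd
    have h2 : Matrix.diagonal d * Matrix.diagonal (fun i => (d i)⁻¹) = 1 := by
        rw [Matrix.diagonal_mul_diagonal]
        simp [hd]
    induction hp using Submodule.span_induction with
    | mem p hp =>
      apply Submodule.subset_span
      intro t
      have := M.mul_mem (M.mul_mem (hD d) (hp t)) (hD (fun i => (d i)⁻¹))
      convert this using 1
      rw [mul_add, add_mul, mul_one, h2]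
      simp
    | zero => simp
    | add a b _ _ ha hb => rw [mul_add, add_mul]; exact S.add_mem ha hb
    | smul t a _ ha => simpa using S.smul_mem t ha
  have hdiag : ∀ i, Matrix.single i i (1 : K) ∈ S := by
    intro i
    apply Submodule.subset_span
    intro t
    convert hD (fun j => 1 + if j = i then t else 0) using 1
    ext a b
    by_cases hab : a = b
    · subst hab; simp [Matrix.single_apply, eq_comm]
    · simp [hab, Matrix.single_apply]
      intro h1 h2; exact absurd (h1.symm.trans h2) hab
  have hoff : ∀ l k, l ≠ k → Matrix.single l k (1 : K) ∈ S := by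
    intro l k hlk
    obtain ⟨i, hi⟩ : ∃ i, w' i k ≠ 0 := by
      by_contra hcon
      push Not at hcon
      have := congrFun (congrFun hww k) k
      rw [Matrix.mul_apply, Matrix.one_apply_eq] at this
      simp [hcon] at this
    set p : Matrix (Fin n) (Fin n) K := w * Matrix.diagonal (Pi.single i 1) * w' with hp
    have hpS : p ∈ S := by
      apply Submodule.subset_span
      intro t
      have := M.mul_mem (M.mul_mem hw (hD (fun j => 1 + t * (Pi.single i (1 : K) : Fin n → K) j))) hw'
      convert this using 1
      rw [← Matrix.diagonal_add, mul_add, add_mul, Matrix.diagonal_one, mul_one, hww]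
      congr 1
      have : (Matrix.diagonal fun j => t * (Pi.single i 1 : Fin n → K) j) = t • Matrix.diagonal (Pi.single i 1) := by
        ext a b
        by_cases hab : a = b
        · subst hab; simp
        · simp [hab]
      rw [this]
      simp [hp]
    have hplk : p l k ≠ 0 := by
      rw [hp, Matrix.mul_apply]
      simp only [Matrix.mul_diagonal, Pi.single_apply]
      simp [hnz l i, hi]
    -- one-parameter conjugations
    have hone : ∀ z ∈ S, ∀ (m : Fin n) (t : K), t ≠ 0 →
        (Matrix.of fun a b => (if a = m then t else 1) * z a b * (if b = m then t⁻¹ else 1)) ∈ S := by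
      intro z hz m t ht
      have := hconj z hz (fun a => if a = m then t else 1) (by intro i; split_ifs <;> simp [ht])
      convert this using 1
      ext a b
      simp only [Matrix.of_apply, Matrix.mul_diagonal, Matrix.diagonal_mul]
      congr 1
      split_ifs <;> simp
    obtain ⟨t1, ht1⟩ := Infinite.exists_notMem_finset ({0, 1} : Finset K)
    obtain ⟨t2, ht2⟩ := Infinite.exists_notMem_finset ({0, 1, t1} : Finset K)
    simp only [Finset.mem_insert, Finset.mem_singleton, not_or] at ht1 ht2
    have e1 : t1 - 1 ≠ 0 := sub_ne_zero.mpr ht1.2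
    have e2 : t2 - 1 ≠ 0 := sub_ne_zero.mpr ht2.2.1
    have e3 : t1 - t2 ≠ 0 := sub_ne_zero.mpr (Ne.symm ht2.2.2)
    have n1 := ht1.1
    have n2 := ht2.1
    have hr : (Matrix.of fun a b => if a = l ∧ b ≠ l then p a b else 0) ∈ S := by
      have h1 := S.smul_mem (t1 * (t1 - 1)⁻¹) (S.sub_mem (hone p hpS l t1 ht1.1) hpS)
      have h2 := S.smul_mem (t2 * (t2 - 1)⁻¹) (S.sub_mem (hone p hpS l t2 ht2.1) hpS)
      have h3 := S.smul_mem (t1 - t2)⁻¹ (S.sub_mem h1 h2)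
      convert h3 using 1
      ext a b
      simp only [Matrix.of_apply, Matrix.smul_apply, Matrix.sub_apply, smul_eq_mul]
      by_cases ha : a = l <;> by_cases hb : b = l <;> simp [ha, hb] <;> field_simp <;> (try ring_nf) <;> (try simp)
    have h4 := S.smul_mem (((t1⁻¹ - 1) * p l k)⁻¹) (S.sub_mem (hone _ hr k t1 ht1.1) hr)
    convert h4 using 1
    have e4 : t1⁻¹ - 1 ≠ 0 := by
      intro h; apply e1; field_simp at h; linear_combination -h
    ext a b
    simp only [Matrix.of_apply, Matrix.smul_apply, Matrix.sub_apply, smul_eq_mul, Matrix.single_apply]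
    by_cases ha : a = l
    · subst ha
      by_cases hb : b = k
      · subst hb
        have e5 : 1 - t1 ≠ 0 := sub_ne_zero.mpr (Ne.symm ht1.2)
        simp [hlk, hlk.symm]
        field_simp
        try rw [div_self e5]
      · simp [hlk, hb, Ne.symm hb]
    · simp [ha, Ne.symm ha]
  rw [eq_top_iff]
  intro z _
  rw [Matrix.matrix_eq_sum_single z]
  refine S.sum_mem fun a _ => S.sum_mem fun b _ => ?_
  have : Matrix.single a b (z a b) = z a b • Matrix.single a b (1 : K) := by simp
  rw [this]
  apply S.smul_mem
  by_cases hab : a = b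
  · subst hab; exact hdiag a
  · exact hoff a b hab

lemma p4_aeval {n : ℕ} {K : Type} [Field K] (x g x1 : Matrix (Fin n) (Fin n) K)
    (hx : x * g = g * x1) (p : Polynomial K) :
    Polynomial.aeval x p * g = g * Polynomial.aeval x1 p := by
  induction p using Polynomial.induction_on' with
  | add p q hp hq => rw [map_add, map_add, add_mul, mul_add, hp, hq]
  | monomial k a =>
    rw [Polynomial.aeval_monomial, Polynomial.aeval_monomial]
    have : SemiconjBy g x1 x := hx.symm
    have h2 : x ^ k * g = g * x1 ^ k := (this.pow_right k).symm
    rw [mul_assoc, h2, ← mul_assoc, ← mul_assoc, Algebra.commutes]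

lemma p4_diag {n : ℕ} {K : Type} [Field K] (lam : Fin n → K) (hlam : Function.Injective lam)
    (d : Fin n → K) : ∃ p : Polynomial K, Polynomial.aeval (Matrix.diagonal lam) p = Matrix.diagonal d := by
  refine ⟨Lagrange.interpolate Finset.univ lam d, ?_⟩
  have := Polynomial.aeval_algHom_apply (Matrix.diagonalAlgHom (n := Fin n) (α := K) K) lam (Lagrange.interpolate Finset.univ lam d)
  simp only [Matrix.diagonalAlgHom_apply] at this
  rw [this]
  congr 1
  funext i
  have h2 := Polynomial.aeval_algHom_apply (Pi.evalAlgHom K (fun _ : Fin n => K) i) lam (Lagrange.interpolate Finset.univ lam d)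
  simp only [Pi.evalAlgHom_apply] at h2
  rw [← h2, Polynomial.coe_aeval_eq_eval]
  exact Lagrange.eval_interpolate_at_node _ hlam.injOn (Finset.mem_univ i)

lemma p4_dense {n : ℕ} {K : Type} [Field K] [Infinite K] (x g g' : Matrix (Fin n) (Fin n) K)
    (lam : Fin n → K) (hg : g * g' = 1) (hx : x * g = g * Matrix.diagonal lam)
    (hlam : Function.Injective lam) (y y' : Matrix (Fin n) (Fin n) K) (hyy : y * y' = 1)
    (M : Submonoid (Matrix (Fin n) (Fin n) K)) (hE : ∀ p : Polynomial K, Polynomial.aeval x p ∈ M)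
    (hy : y ∈ M) (hy' : y' ∈ M) (hadj : Algebra.adjoin K {x, y} = ⊤) (htr : y.trace ≠ 0)
    (P : MvPolynomial (Fin n × Fin n) K) (hP : ∀ Z ∈ M, mev P Z = 0) : ∀ Z, mev P Z = 0 := by
  have hg' : g' * g = 1 := mul_eq_one_comm.mp hg
  have hcm : ∀ z1 z2, g' * (z1 * z2) * g = (g' * z1 * g) * (g' * z2 * g) := by
    intro z1 z2
    calc _ = g' * z1 * 1 * z2 * g := by simp only [mul_assoc, one_mul]
      _ = _ := by rw [← hg]; simp only [mul_assoc]
  have hcm' : ∀ z1 z2, g * (z1 * z2) * g' = (g * z1 * g') * (g * z2 * g') := by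
    intro z1 z2
    calc _ = g * z1 * 1 * z2 * g' := by simp only [mul_assoc, one_mul]
      _ = _ := by rw [← hg']; simp only [mul_assoc]
  have hback : ∀ z, g * (g' * z * g) * g' = z := by
    intro z
    calc _ = (g * g') * z * (g * g') := by simp only [mul_assoc]
      _ = _ := by rw [hg]; simp
  have hback' : ∀ z, g' * (g * z * g') * g = z := by
    intro z
    calc _ = (g' * g) * z * (g' * g) := by simp only [mul_assoc]
      _ = _ := by rw [hg']; simp
  set y1 := g' * y * g with hy1
  set y1' := g' * y' * g with hy1'
  let M1 : Submonoid (Matrix (Fin n) (Fin n) K) :=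
    { carrier := {z | g * z * g' ∈ M}
      mul_mem' := by
        intro a b ha hb
        simp only [Set.mem_setOf_eq] at *
        rw [hcm']
        exact M.mul_mem ha hb
      one_mem' := by
        simp only [Set.mem_setOf_eq, mul_one, hg]
        exact M.one_mem }
  have hD : ∀ d, Matrix.diagonal d ∈ M1 := by
    intro d
    obtain ⟨p, hp⟩ := p4_diag lam hlam d
    show g * _ * g' ∈ M
    rw [← hp, ← p4_aeval x g _ hx, mul_assoc, hg, mul_one]
    exact hE p
  have hconn : ∀ a b, Relation.ReflTransGen (fun a b => y1 a b ≠ 0) a b := by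
    let A : Subalgebra K (Matrix (Fin n) (Fin n) K) :=
      { carrier := {z | ∀ a b, (g' * z * g) a b ≠ 0 → Relation.ReflTransGen (fun a b => y1 a b ≠ 0) a b}
        mul_mem' := by
          intro z1 z2 h1 h2 a b h
          rw [hcm, Matrix.mul_apply] at h
          obtain ⟨c, _, hc⟩ := Finset.exists_ne_zero_of_sum_ne_zero h
          exact (h1 a c (left_ne_zero_of_mul hc)).trans (h2 c b (right_ne_zero_of_mul hc))
        add_mem' := by
          intro z1 z2 h1 h2 a b h
          rw [mul_add, add_mul, Matrix.add_apply] at h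
          by_cases h3 : (g' * z1 * g) a b = 0
          · rw [h3, zero_add] at h
            exact h2 a b h
          · exact h1 a b h3
        algebraMap_mem' := by
          intro r a b h
          have : g' * (algebraMap K (Matrix (Fin n) (Fin n) K) r) * g = algebraMap K _ r := by
            rw [← Algebra.commutes, mul_assoc, hg', mul_one]
          rw [this, Matrix.algebraMap_matrix_apply] at h
          by_cases hab : a = b
          · subst hab; exact Relation.ReflTransGen.refl
          · simp [hab] at h }
    have hA : A = ⊤ := by
      rw [eq_top_iff, ← hadj, Algebra.adjoin_le_iff]
      rintro z (rfl | rfl)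
      · intro a b h
        rw [mul_assoc, hx, ← mul_assoc, hg', one_mul] at h
        by_cases hab : a = b
        · subst hab; exact Relation.ReflTransGen.refl
        · simp [hab] at h
      · intro a b h
        exact Relation.ReflTransGen.single h
    intro a b
    have : g * Matrix.single a b (1 : K) * g' ∈ A := by rw [hA]; trivial
    refine this a b ?_
    rw [hback']
    simp
  have htr1 : y1.trace ≠ 0 := by
    rw [hy1, Matrix.trace_mul_comm, ← mul_assoc, hg, one_mul]; exact htr
  obtain ⟨i, _, hi⟩ := Finset.exists_ne_zero_of_sum_ne_zero htr1
  obtain ⟨r, hr⟩ := Wk_full hconn i hi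
  obtain ⟨w, w', hw, hw', hww, hnz⟩ := p3_word M1 hD y1 y1' (by show g * _ * g' ∈ M; rw [hback]; exact hy)
    (by show g * _ * g' ∈ M; rw [hback]; exact hy') (by rw [hy1, hy1', ← hcm, hyy, mul_one, hg']) r
  have hspan := p3_span M1 hD w w' hw hw' hww (fun a b => hnz a b (hr a b))
  refine p2_dense M ?_ P hP
  rw [eq_top_iff]
  intro Z _
  let L : Matrix (Fin n) (Fin n) K →ₗ[K] Matrix (Fin n) (Fin n) K :=
    (LinearMap.mulRight K g') ∘ₗ (LinearMap.mulLeft K g)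
  have hle : Submodule.span K {p : Matrix (Fin n) (Fin n) K | ∀ t : K, 1 + t • p ∈ M1} ≤
      (Submodule.span K {p : Matrix (Fin n) (Fin n) K | ∀ t : K, 1 + t • p ∈ M}).comap L := by
    rw [Submodule.span_le]
    intro p hp
    apply Submodule.subset_span
    intro t
    have : g * (1 + t • p) * g' ∈ M := hp t
    rw [mul_add, add_mul, mul_one, hg] at this
    simpa [L] using this
  rw [hspan] at hle
  have := hle (Submodule.mem_top (x := g' * Z * g))
  simp only [Submodule.mem_comap, L, LinearMap.comp_apply, LinearMap.mulLeft_apply, LinearMap.mulRight_apply] at this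
  rwa [hback] at this

lemma p5_diag {n : ℕ} {K : Type} [Field K] [IsAlgClosed K] (x : Matrix (Fin n) (Fin n) K)
    (hs : x.charpoly.Separable) :
    ∃ (g g' : Matrix (Fin n) (Fin n) K) (lam : Fin n → K), g * g' = 1 ∧
      x * g = g * Matrix.diagonal lam ∧ Function.Injective lam := by
  classical
  have hcard : x.charpoly.roots.toFinset.card = n := by
    rw [Multiset.toFinset_card_of_nodup (Polynomial.nodup_roots hs), IsAlgClosed.card_roots_eq_natDegree,
      Matrix.charpoly_natDegree_eq_dim, Fintype.card_fin]
  let e := (x.charpoly.roots.toFinset.equivFinOfCardEq hcard).symm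
  let lam : Fin n → K := fun i => (e i : K)
  have hlam : Function.Injective lam := fun i j h => e.injective (Subtype.ext h)
  have hev : ∀ i, Module.End.HasEigenvalue (Matrix.toLin' x) (lam i) := by
    intro i
    rw [Module.End.hasEigenvalue_iff_isRoot_charpoly, Matrix.charpoly_toLin']
    have := (e i).2
    rw [Multiset.mem_toFinset] at this
    exact Polynomial.isRoot_of_mem_roots this
  choose v hv using fun i => (hev i).exists_hasEigenvector
  have hli := Module.End.eigenvectors_linearIndependent' (Matrix.toLin' x) lam hlam v hv
  let g : Matrix (Fin n) (Fin n) K := Matrix.of fun a b => v b a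
  have hu : IsUnit g := by
    rw [← Matrix.linearIndependent_cols_iff_isUnit]
    exact hli
  obtain ⟨u, hu⟩ := hu
  refine ⟨g, ((u⁻¹ : _ˣ) : Matrix (Fin n) (Fin n) K), lam, by rw [← hu]; simp, ?_, hlam⟩
  ext a b
  have := congrFun (hv b).apply_eq_smul a
  simp only [Matrix.toLin'_apply, Pi.smul_apply, smul_eq_mul] at this
  rw [Matrix.mul_diagonal, Matrix.mul_apply]
  simp only [g, Matrix.of_apply]
  rw [mul_comm, ← this]
  rfl

lemma p5_deg {σ τ : Type} {K : Type} [Field K] (P : MvPolynomial σ K) (f : σ → MvPolynomial τ K)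
    (hf : ∀ i, (f i).totalDegree ≤ 1) : (MvPolynomial.aeval f P).totalDegree ≤ P.totalDegree := by
  rw [MvPolynomial.aeval_def, MvPolynomial.eval₂_eq]
  refine MvPolynomial.totalDegree_finsetSum_le fun d hd => ?_
  refine (MvPolynomial.totalDegree_mul _ _).trans ?_
  have h1 : ((algebraMap K (MvPolynomial τ K)) (MvPolynomial.coeff d P)).totalDegree = 0 :=
    MvPolynomial.totalDegree_C _
  rw [h1, zero_add]
  refine (MvPolynomial.totalDegree_finset_prod _ _).trans ?_
  refine le_trans (Finset.sum_le_sum (g := fun i => d i) fun i _ => ?_) (MvPolynomial.le_totalDegree hd)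
  refine (MvPolynomial.totalDegree_pow _ _).trans ?_
  simpa using Nat.mul_le_mul_left (d i) (hf i)

lemma p5_poly {σ ι : Type} [Fintype σ] [DecidableEq σ] [Fintype ι] {K : Type} [Field K] (k : ℕ) (pts : ι → σ → K)
    (h : Fintype.card ι < k ^ Fintype.card σ) :
    ∃ P : MvPolynomial σ K, P ≠ 0 ∧ P.totalDegree ≤ Fintype.card σ * k ∧
      ∀ i, MvPolynomial.eval (pts i) P = 0 := by
  classical
  let m : (σ → Fin k) → (σ →₀ ℕ) := fun e => Finsupp.equivFunOnFinite.symm (fun i => (e i : ℕ))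
  have hm : Function.Injective m := by
    intro e e' he
    funext i
    have := DFunLike.congr_fun he i
    simpa [m, Fin.ext_iff] using this
  let Φ : ((σ → Fin k) → K) →ₗ[K] MvPolynomial σ K :=
    ∑ e, (MvPolynomial.monomial (m e)).comp (LinearMap.proj e)
  have hΦ : ∀ c, Φ c = ∑ e, MvPolynomial.monomial (m e) (c e) := by
    intro c; simp [Φ]
  let Ψ : ((σ → Fin k) → K) →ₗ[K] (ι → K) :=
    LinearMap.pi fun i => (MvPolynomial.aeval (pts i)).toLinearMap ∘ₗ Φ
  have hker : LinearMap.ker Ψ ≠ ⊥ := by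
    apply LinearMap.ker_ne_bot_of_finrank_lt
    simpa using h
  obtain ⟨c, hc, hc0⟩ := (Submodule.ne_bot_iff _).mp hker
  refine ⟨Φ c, ?_, ?_, ?_⟩
  · intro h0
    apply hc0
    funext e
    have := congrArg (MvPolynomial.coeff (m e)) h0
    rw [hΦ, MvPolynomial.coeff_sum] at this
    simpa [MvPolynomial.coeff_monomial, hm.eq_iff] using this
  · rw [hΦ]
    refine MvPolynomial.totalDegree_finsetSum_le fun e _ => ?_
    refine (MvPolynomial.totalDegree_monomial_le _ _).trans ?_
    rw [Finsupp.sum_fintype _ _ (fun _ => rfl)]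
    refine (Finset.sum_le_card_nsmul _ _ k fun i _ => ?_).trans (by simp)
    simp [m]
  · intro i
    have := congrFun (LinearMap.mem_ker.mp hc) i
    simpa [Ψ, MvPolynomial.aeval_eq_eval] using this

lemma p6_letter {n : ℕ} {F K : Type} [Field F] [Fintype F] [DecidableEq F] [Field K] [Infinite K] (f : F →+* K)
    (S : Finset (Fin n → F)) (P : MvPolynomial (Fin n × Fin n) K) (δ : ℕ) (hδ : P.totalDegree ≤ δ)
    (hS : δ * Fintype.card F ^ n < S.card * Fintype.card F)
    (A B : Matrix (Fin n) (Fin n) K) (E : Fin n → Matrix (Fin n) (Fin n) K)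
    (h : ∀ c ∈ S, mev P (A * (∑ i, f (c i) • E i) * B) = 0) (c : Fin n → K) :
    mev P (A * (∑ i, c i • E i) * B) = 0 := by
  classical
  let l : Fin n × Fin n → MvPolynomial (Fin n) K := fun ab =>
    ∑ i, MvPolynomial.C ((A * E i * B) ab.1 ab.2) * MvPolynomial.X i
  let Q : MvPolynomial (Fin n) K := MvPolynomial.aeval l P
  have hQdeg : Q.totalDegree ≤ δ := by
    refine (p5_deg P l fun ab => ?_).trans hδ
    refine MvPolynomial.totalDegree_finsetSum_le fun i _ => ?_
    refine (MvPolynomial.totalDegree_mul _ _).trans ?_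
    simp
  have hQ : ∀ c, MvPolynomial.eval c Q = mev P (A * (∑ i, c i • E i) * B) := by
    intro c
    simp only [Q, mev]
    rw [← MvPolynomial.coe_aeval_eq_eval, ← MvPolynomial.coe_aeval_eq_eval]
    simp only [RingHom.coe_coe]
    rw [← AlgHom.comp_apply, MvPolynomial.comp_aeval]
    congr 2
    funext ab
    simp only [l, map_sum, map_mul]
    rw [Finset.mul_sum, Finset.sum_mul, Matrix.sum_apply]
    refine Finset.sum_congr rfl fun i _ => ?_
    simp [mul_comm]
  rw [← hQ]
  suffices hQ0 : Q = 0 by rw [hQ0, map_zero]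
  by_contra hne
  have hsz := MvPolynomial.schwartz_zippel_totalDegree hne (Finset.univ.image f)
  have hcard : (Finset.univ.image f).card = Fintype.card F := by
    rw [Finset.card_image_of_injective _ f.injective, Finset.card_univ]
  rw [hcard] at hsz
  have hsub : S.image (fun c => fun i => f (c i)) ⊆
      {g ∈ Fintype.piFinset fun _ : Fin n ↦ Finset.univ.image f | MvPolynomial.eval g Q = 0} := by
    intro g hg
    rw [Finset.mem_image] at hg
    obtain ⟨c, hc, rfl⟩ := hg
    rw [Finset.mem_filter, Fintype.mem_piFinset]
    refine ⟨fun i => Finset.mem_image_of_mem _ (Finset.mem_univ _), ?_⟩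
    rw [hQ]; exact h c hc
  have hle := Finset.card_le_card hsub
  rw [Finset.card_image_of_injective] at hle
  swap
  · intro c c' hcc
    funext i
    exact f.injective (congrFun hcc i)
  have hq : 0 < Fintype.card F := Fintype.card_pos
  have hq' : (0 : ℚ≥0) < Fintype.card F := by exact_mod_cast hq
  rw [div_le_div_iff₀ (pow_pos hq' n) hq'] at hsz
  have hsz' : (Finset.card {g ∈ Fintype.piFinset fun _ : Fin n ↦ Finset.univ.image f | MvPolynomial.eval g Q = 0}) * Fintype.card F
      ≤ Q.totalDegree * Fintype.card F ^ n := by exact_mod_cast hsz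
  have h1 := Nat.mul_le_mul_right (Fintype.card F) hle
  have h2 := Nat.mul_le_mul_right (Fintype.card F ^ n) hQdeg
  omega

lemma p6_coord {n : ℕ} {K : Type} [Field K] (x : Matrix (Fin n) (Fin n) K) (p : Polynomial K) :
    ∃ c : Fin n → K, Polynomial.aeval x p = ∑ i : Fin n, c i • x ^ (i : ℕ) := by
  rcases Nat.eq_zero_or_pos n with hn | hn
  · subst hn
    exact ⟨0, Subsingleton.elim _ _⟩
  have h1 : Polynomial.aeval x p = Polynomial.aeval x (p %ₘ x.charpoly) := by
    conv_lhs => rw [← Polynomial.modByMonic_add_div p x.charpoly]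
    rw [map_add, map_mul, Matrix.aeval_self_charpoly, zero_mul, add_zero]
  have hd : (p %ₘ x.charpoly).natDegree < n := by
    have := Polynomial.natDegree_modByMonic_lt p x.charpoly_monic (by
      intro h
      have := x.charpoly_natDegree_eq_dim
      rw [h] at this; simp at this; omega)
    rwa [x.charpoly_natDegree_eq_dim, Fintype.card_fin] at this
  refine ⟨fun i => (p %ₘ x.charpoly).coeff i, ?_⟩
  rw [h1, Polynomial.aeval_eq_sum_range' hd, Finset.sum_range]

lemma p6_S {n : ℕ} (hn : 1 ≤ n) {F : Type} [Field F] [Fintype F] [DecidableEq F]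
    (x : Matrix.SpecialLinearGroup (Fin n) F) :
    ∃ S : Finset (Fin n → F), (∀ c ∈ S, ∃ (z : Fˣ) (k : ℕ), ∑ i : Fin n, c i • (x : Matrix (Fin n) (Fin n) F) ^ (i : ℕ)
      = (z : F) • (x : Matrix (Fin n) (Fin n) F) ^ k) ∧
      (Fintype.card F - 1) * orderOf x ≤ n * S.card := by
  classical
  have hc : ∀ a : Fˣ × Fin (orderOf x), ∃ c : Fin n → F,
      (a.1 : F) • (x : Matrix (Fin n) (Fin n) F) ^ (a.2 : ℕ) = ∑ i : Fin n, c i • (x : Matrix (Fin n) (Fin n) F) ^ (i : ℕ) := by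
    intro a
    obtain ⟨c, hc⟩ := p6_coord (x : Matrix (Fin n) (Fin n) F) (Polynomial.monomial a.2 (a.1 : F))
    refine ⟨c, ?_⟩
    rw [← hc, Polynomial.aeval_monomial, Algebra.smul_def]
  choose φ hφ using hc
  refine ⟨Finset.univ.image φ, ?_, ?_⟩
  · intro c hc
    rw [Finset.mem_image] at hc
    obtain ⟨a, _, rfl⟩ := hc
    exact ⟨a.1, a.2, (hφ a).symm⟩
  · have := Finset.card_le_mul_card_image (f := φ) Finset.univ n ?_
    · simpa [Fintype.card_units] using this
    · intro b hb
      rw [Finset.mem_image] at hb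
      obtain ⟨a0, _, rfl⟩ := hb
      have hdet : ∀ a, φ a = φ a0 → (a.1 : F) ^ n = (a0.1 : F) ^ n := by
        intro a ha
        have h1 := hφ a
        rw [ha, ← hφ a0] at h1
        have := congrArg Matrix.det h1
        simpa [Matrix.det_smul, Matrix.det_pow] using this
      refine (Finset.card_le_card_of_injOn (t := (Polynomial.nthRootsFinset n ((a0.1 : F) ^ n))) (fun a => (a.1 : F)) ?_ ?_).trans
        ?_
      · intro a ha
        simp only [Finset.coe_filter, Finset.mem_univ, true_and, Set.mem_setOf_eq] at ha
        simp only [Finset.mem_coe]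
        rw [Polynomial.mem_nthRootsFinset (by omega)]
        exact hdet a ha
      · intro a ha b hb hab
        simp only [Finset.coe_filter, Finset.mem_univ, true_and, Set.mem_setOf_eq] at ha hb
        have h1 := hφ a
        rw [ha, ← hb, ← hφ b] at h1
        have hab' : a.1 = b.1 := Units.ext hab
        rw [hab'] at h1
        have h2 := smul_right_injective _ (Units.ne_zero b.1) h1
        have h3 : x ^ (a.2 : ℕ) = x ^ (b.2 : ℕ) := by
          apply Matrix.SpecialLinearGroup.coeMonoidHom_injective
          simpa using h2
        have h4 := pow_injOn_Iio_orderOf (x := x) (by simp) (by simp) h3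
        exact Prod.ext hab' (Fin.ext h4)
      · rw [Polynomial.nthRootsFinset_def]
        exact (Multiset.toFinset_card_le _).trans (Polynomial.card_nthRoots _ _)

lemma p7_adjoin {n : ℕ} {F K : Type} [Field F] [Field K] [Algebra F K]
    (x y : Matrix (Fin n) (Fin n) F) (hadj : Algebra.adjoin F {x, y} = ⊤) :
    Algebra.adjoin K {x.map (algebraMap F K), y.map (algebraMap F K)} = ⊤ := by
  let Φ : Matrix (Fin n) (Fin n) F →ₐ[F] Matrix (Fin n) (Fin n) K := (Algebra.ofId F K).mapMatrix
  have hΦ : ∀ z, Φ z = z.map (algebraMap F K) := fun z => rfl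
  set A := Algebra.adjoin K {x.map (algebraMap F K), y.map (algebraMap F K)} with hA
  have h1 : Algebra.adjoin F {x, y} ≤ (A.restrictScalars F).comap Φ := by
    rw [Algebra.adjoin_le_iff]
    rintro z (rfl | rfl)
    · exact Algebra.subset_adjoin (by simp [hΦ])
    · exact Algebra.subset_adjoin (by simp [hΦ])
  rw [hadj] at h1
  rw [eq_top_iff]
  intro z _
  rw [Matrix.matrix_eq_sum_single z]
  refine A.sum_mem fun a _ => A.sum_mem fun b _ => ?_
  have h2 : Matrix.single a b (1 : K) ∈ A := by
    have h3 : Φ (Matrix.single a b (1 : F)) ∈ A := h1 (Algebra.mem_top (x := Matrix.single a b (1 : F)))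
    rw [hΦ, Matrix.map_single] at h3
    simpa using h3
  have : Matrix.single a b (z a b) = z a b • Matrix.single a b (1 : K) := by simp
  rw [this]
  exact A.smul_mem h2 _

lemma p7_main0 {n : ℕ} (hn : 1 ≤ n) {F : Type} (K : Type) [Field F] [Fintype F] [Field K] [IsAlgClosed K] [Algebra F K] (x y : Matrix.SpecialLinearGroup (Fin n) F)
    (hsep : (x : Matrix (Fin n) (Fin n) F).charpoly.Separable)
    (hord : Fintype.card F ^ (n - 1) ≤ 2 * orderOf x)
    (hadj : Algebra.adjoin F {(x : Matrix (Fin n) (Fin n) F), (y : Matrix (Fin n) (Fin n) F)} = ⊤)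
    (htr : (y : Matrix (Fin n) (Fin n) F).trace ≠ 0) (H : Subgroup (Matrix.SpecialLinearGroup (Fin n) F))
    (hx : x ∈ H) (hy : y ∈ H) (k : ℕ) (hk : 4 * n * (n ^ 2 * k) < Fintype.card F) :
    k ^ (n ^ 2) ≤ (Fintype.card F - 1) * Nat.card H := by
  classical
  by_contra hcon
  push Not at hcon
  let ι : F →+* K := algebraMap F K
  let m : Matrix.SpecialLinearGroup (Fin n) F →* Matrix (Fin n) (Fin n) K :=
    ((RingHom.mapMatrix ι : Matrix (Fin n) (Fin n) F →+* Matrix (Fin n) (Fin n) K).toMonoidHom).comp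
      Matrix.SpecialLinearGroup.coeMonoidHom
  have hm : ∀ z, m z = (z : Matrix (Fin n) (Fin n) F).map ι := fun z => rfl
  haveI : Fintype H := Fintype.ofFinite H
  obtain ⟨P, hP0, hPdeg, hP⟩ := p5_poly (σ := Fin n × Fin n) (ι := Fˣ × H) (K := K) k
    (fun a => fun ij => (ι (a.1 : F) • m (a.2 : Matrix.SpecialLinearGroup (Fin n) F)) ij.1 ij.2) (by
      rw [Fintype.card_prod, Fintype.card_prod, Fintype.card_units, Fintype.card_fin, ← pow_two,
        ← Nat.card_eq_fintype_card (α := H)]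
      exact hcon)
  have hP' : ∀ (z : Fˣ), ∀ h ∈ H, mev P (ι (z : F) • m h) = 0 := fun z h hh => hP (z, ⟨h, hh⟩)
  simp only [Fintype.card_prod, Fintype.card_fin, ← pow_two] at hPdeg
  obtain ⟨S, hS, hScard⟩ := p6_S hn x
  have hq : 2 ≤ Fintype.card F := Fintype.one_lt_card
  have hSb : n ^ 2 * k * Fintype.card F ^ n < S.card * Fintype.card F := by
    set q := Fintype.card F with hqdef
    have e1 : q ^ n = q ^ (n - 1) * q := by rw [← pow_succ, Nat.sub_add_cancel hn]
    have e2 : q ≤ 2 * (q - 1) := by omega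
    have e3 : q ^ n ≤ 4 * (n * S.card) := by
      calc q ^ n = q ^ (n - 1) * q := e1
        _ ≤ (2 * orderOf x) * (2 * (q - 1)) := Nat.mul_le_mul hord e2
        _ = 4 * ((q - 1) * orderOf x) := by ring
        _ ≤ _ := Nat.mul_le_mul_left 4 hScard
    have e4 : 0 < q ^ n := pow_pos (by omega) n
    have e5 : 4 * n * (n ^ 2 * k * q ^ n) < 4 * n * (S.card * q) := by
      calc 4 * n * (n ^ 2 * k * q ^ n) = (4 * n * (n ^ 2 * k)) * q ^ n := by ring
        _ < q * q ^ n := Nat.mul_lt_mul_of_pos_right hk e4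
        _ ≤ q * (4 * (n * S.card)) := Nat.mul_le_mul_left q e3
        _ = _ := by ring
    exact lt_of_mul_lt_mul_left e5 (Nat.zero_le _)
  have hxK : ∀ i : ℕ, (m x) ^ i = m (x ^ i) := fun i => (map_pow m x i).symm
  let M : Submonoid (Matrix (Fin n) (Fin n) K) :=
    Submonoid.closure (Set.range (fun p : Polynomial K => Polynomial.aeval (m x) p) ∪ m '' H)
  have hsm : ∀ (a : K) (A B : Matrix (Fin n) (Fin n) K), (a • A) * B = a • (A * B) := fun a A B => smul_mul_assoc a A B
  have key : ∀ B ∈ M, ∀ (z : Fˣ), ∀ h ∈ H, mev P (ι (z : F) • m h * B) = 0 := by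
    intro B hB
    induction hB using Submonoid.closure_induction_left with
    | one => intro z h hh; rw [mul_one]; exact hP' z h hh
    | mul_left b hb B' hB' ih =>
      intro z h hh
      rw [← mul_assoc]
      rcases hb with ⟨p, rfl⟩ | ⟨h', hh', rfl⟩
      · obtain ⟨c, hc⟩ := p6_coord (m x) p
        show mev P (_ * Polynomial.aeval (m x) p * B') = 0
        rw [hc]
        apply p6_letter ι S P (n ^ 2 * k) hPdeg hSb
        intro c hc
        obtain ⟨z', j, hzj⟩ := hS c hc
        have e : ∑ i, ι (c i) • (m x) ^ (i : ℕ) = ι (z' : F) • m (x ^ j) := by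
          have := congrArg (ι.mapMatrix) hzj
          rw [map_sum] at this
          have e6 : ∀ (a : F) (Z : Matrix (Fin n) (Fin n) F), ι.mapMatrix (a • Z) = ι a • ι.mapMatrix Z := by
            intro a Z; ext i j; simp
          simp only [e6, map_pow] at this
          rw [← hxK]
          exact this
        rw [e]
        have e7 : ι (z : F) • m h * ι (z' : F) • m (x ^ j) = ι ((z * z' : Fˣ) : F) • m (h * x ^ j) := by
          rw [smul_mul_smul_comm, Units.val_mul, map_mul, map_mul]
        rw [e7]
        exact ih _ _ (H.mul_mem hh (H.pow_mem hx j))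
      · rw [smul_mul_assoc, ← map_mul]
        exact ih _ _ (H.mul_mem hh hh')
  have hsepK : (m x).charpoly.Separable := by
    rw [hm, Matrix.charpoly_map]
    exact hsep.map
  obtain ⟨g, g', lam, hg, hgx, hlam⟩ := p5_diag (m x) hsepK
  have hinf : Infinite K := IsAlgClosed.instInfinite
  have hall := p4_dense (m x) g g' lam hg hgx hlam (m y) (m y⁻¹) (by rw [← map_mul]; simp) M
    (fun p => Submonoid.subset_closure (Or.inl ⟨p, rfl⟩))
    (Submonoid.subset_closure (Or.inr ⟨y, hy, rfl⟩)) (Submonoid.subset_closure (Or.inr ⟨y⁻¹, H.inv_mem hy, rfl⟩))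
    (p7_adjoin _ _ hadj) (by
      rw [hm]
      have : ((y : Matrix (Fin n) (Fin n) F).map ι).trace = ι (y : Matrix (Fin n) (Fin n) F).trace := by
        simp [Matrix.trace]
      rw [this]
      simpa using htr) P
    (fun Z hZ => by
      have := key Z hZ 1 1 H.one_mem
      simpa using this)
  apply hP0
  apply MvPolynomial.funext
  intro v
  have := hall (Matrix.of fun a b => v (a, b))
  simpa [mev] using this

lemma p7_main {n : ℕ} (hn : 1 ≤ n) {F : Type} [Field F] [Fintype F] (x y : Matrix.SpecialLinearGroup (Fin n) F)
    (hsep : (x : Matrix (Fin n) (Fin n) F).charpoly.Separable)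
    (hord : Fintype.card F ^ (n - 1) ≤ 2 * orderOf x)
    (hadj : Algebra.adjoin F {(x : Matrix (Fin n) (Fin n) F), (y : Matrix (Fin n) (Fin n) F)} = ⊤)
    (htr : (y : Matrix (Fin n) (Fin n) F).trace ≠ 0) (H : Subgroup (Matrix.SpecialLinearGroup (Fin n) F))
    (hx : x ∈ H) (hy : y ∈ H) (k : ℕ) (hk : 4 * n * (n ^ 2 * k) < Fintype.card F) :
    k ^ (n ^ 2) ≤ (Fintype.card F - 1) * Nat.card H :=
  p7_main0 hn (AlgebraicClosure F) x y hsep hord hadj htr H hx hy k hk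

/-- diagonal matrix with one nontrivial entry -/
def Dm {n : ℕ} {F : Type} [Field F] (i0 : Fin n) (z : F) : Matrix (Fin n) (Fin n) F :=
  Matrix.diagonal fun i => if i = i0 then z else 1

lemma Dm_det {n : ℕ} {F : Type} [Field F] (i0 : Fin n) (z : F) : (Dm i0 z).det = z := by
  simp [Dm, Matrix.det_diagonal]

lemma Dm_mul {n : ℕ} {F : Type} [Field F] (i0 : Fin n) (z w : F) : Dm i0 z * Dm i0 w = Dm i0 (z * w) := by
  rw [Dm, Dm, Dm, Matrix.diagonal_mul_diagonal]
  congr 1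
  funext i
  split_ifs <;> simp

lemma Dm_one {n : ℕ} {F : Type} [Field F] (i0 : Fin n) : Dm i0 (1 : F) = 1 := by
  simp [Dm]

lemma p8_up {n : ℕ} (hn : 1 ≤ n) {F : Type} [Field F] [Fintype F] :
    (Fintype.card F - 1) * Nat.card (Matrix.SpecialLinearGroup (Fin n) F) ≤ Fintype.card F ^ (n ^ 2) := by
  classical
  let i0 : Fin n := ⟨0, hn⟩
  let f : Fˣ × Matrix.SpecialLinearGroup (Fin n) F → Matrix (Fin n) (Fin n) F :=
    fun a => Dm i0 (a.1 : F) * (a.2 : Matrix (Fin n) (Fin n) F)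
  have hf : Function.Injective f := by
    intro a b hab
    have h1 : (a.1 : F) = b.1 := by
      have := congrArg Matrix.det hab
      simpa [f, Dm_det] using this
    have h1' : a.1 = b.1 := Units.ext h1
    have h2 : (a.2 : Matrix (Fin n) (Fin n) F) = b.2 := by
      have := congrArg (fun Z => Dm i0 ((a.1 : F)⁻¹) * Z) hab
      simp only [f, ← mul_assoc, Dm_mul] at this
      rw [← h1] at this
      simpa [Dm_one] using this
    refine Prod.ext h1' (Matrix.SpecialLinearGroup.coeMonoidHom_injective h2)
  have := Nat.card_le_card_of_injective f hf
  rw [Nat.card_prod] at this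
  simpa [Nat.card_eq_fintype_card, Fintype.card_units, Matrix, ← pow_mul, ← pow_two] using this

lemma p8_low {n : ℕ} (hn : 1 ≤ n) {F : Type} [Field F] [Fintype F] :
    Fintype.card F ^ (n ^ 2) ≤ 2 ^ n * ((Fintype.card F - 1) * Nat.card (Matrix.SpecialLinearGroup (Fin n) F)) := by
  classical
  let i0 : Fin n := ⟨0, hn⟩
  let f : GL (Fin n) F → Fˣ × Matrix.SpecialLinearGroup (Fin n) F :=
    fun a => (Matrix.GeneralLinearGroup.det a, ⟨Dm i0 ((a : Matrix (Fin n) (Fin n) F).det⁻¹) * (a : Matrix (Fin n) (Fin n) F), by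
      rw [Matrix.det_mul, Dm_det, inv_mul_cancel₀]
      have := (Matrix.GeneralLinearGroup.det a).ne_zero
      simpa using this⟩)
  have hf : Function.Injective f := by
    intro a b hab
    have ha : (a : Matrix (Fin n) (Fin n) F).det ≠ 0 := by
      have := (Matrix.GeneralLinearGroup.det a).ne_zero
      simpa using this
    have h1 : (a : Matrix (Fin n) (Fin n) F).det = (b : Matrix (Fin n) (Fin n) F).det := by
      have := congrArg (fun t => ((t.1 : Fˣ) : F)) hab
      simpa [f] using this
    have h2 := congrArg (fun t => ((t.2 : Matrix.SpecialLinearGroup (Fin n) F) : Matrix (Fin n) (Fin n) F)) hab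
    simp only [f] at h2
    have h3 := congrArg (fun Z => Dm i0 ((a : Matrix (Fin n) (Fin n) F).det) * Z) h2
    simp only [← mul_assoc, Dm_mul] at h3
    rw [← h1] at h3
    rw [mul_inv_cancel₀ ha, Dm_one, one_mul, one_mul] at h3
    exact Units.ext h3
  have := Nat.card_le_card_of_injective f hf
  rw [Nat.card_prod, Matrix.card_GL_field, Nat.card_units, Nat.card_eq_fintype_card] at this
  refine le_trans ?_ (Nat.mul_le_mul_left _ this)
  set q := Fintype.card F
  have hq : 2 ≤ q := Fintype.one_lt_card
  have e : q ^ (n ^ 2) = ∏ i : Fin n, q ^ n := by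
    simp [← pow_mul, pow_two]
  have e2 : (2 : ℕ) ^ n = ∏ i : Fin n, 2 := by simp
  rw [e, e2, ← Finset.prod_mul_distrib]
  refine Finset.prod_le_prod' fun i _ => ?_
  have h4 : 2 * q ^ (i : ℕ) ≤ q ^ n := by
    calc 2 * q ^ (i : ℕ) ≤ q * q ^ (i : ℕ) := Nat.mul_le_mul_right _ hq
      _ = q ^ ((i : ℕ) + 1) := by ring
      _ ≤ q ^ n := Nat.pow_le_pow_right (by omega) i.2
  omega

lemma p8_main {n : ℕ} (hn : 2 ≤ n) {F : Type} [Field F] [Fintype F] (x y : Matrix.SpecialLinearGroup (Fin n) F)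
    (hsep : (x : Matrix (Fin n) (Fin n) F).charpoly.Separable)
    (hord : Fintype.card F ^ (n - 1) ≤ 2 * orderOf x)
    (hadj : Algebra.adjoin F {(x : Matrix (Fin n) (Fin n) F), (y : Matrix (Fin n) (Fin n) F)} = ⊤)
    (htr : (y : Matrix (Fin n) (Fin n) F).trace ≠ 0)
    (hq : ((16 * n ^ 3) ^ (n ^ 2)).factorial < Fintype.card F) :
    Subgroup.closure {x, y} = ⊤ := by
  set q := Fintype.card F with hqd
  set K0 := (16 * n ^ 3) ^ (n ^ 2) with hK0
  set H := Subgroup.closure {x, y} with hH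
  have hx : x ∈ H := Subgroup.subset_closure (by simp)
  have hy : y ∈ H := Subgroup.subset_closure (by simp)
  have hn3 : 0 < n ^ 3 := pow_pos (by omega) 3
  have hq1 : 16 * n ^ 3 < q := by
    have h1 : 16 * n ^ 3 ≤ K0 := Nat.le_self_pow (by positivity) _
    exact lt_of_le_of_lt (h1.trans (Nat.self_le_factorial _)) hq
  set k := q / (8 * n ^ 3) with hk
  have hk1 : 8 * n ^ 3 * k ≤ q := Nat.mul_div_le _ _
  have hk2 : q < 8 * n ^ 3 * (k + 1) := by
    exact Nat.lt_mul_div_succ q (by positivity)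
  have hk3 : 1 ≤ k := by
    rw [hk, Nat.le_div_iff_mul_le (by positivity)]; omega
  have hk4 : q ≤ 16 * n ^ 3 * k := by nlinarith
  have hk5 : 4 * n * (n ^ 2 * k) < q := by
    have e : 4 * n * (n ^ 2 * k) = 4 * n ^ 3 * k := by ring
    have : 0 < n ^ 3 * k := Nat.mul_pos hn3 hk3
    nlinarith
  have hmain := p7_main (by omega) x y hsep hord hadj htr H hx hy k hk5
  have h1 : (q - 1) * Nat.card (Matrix.SpecialLinearGroup (Fin n) F) ≤ (q - 1) * (K0 * Nat.card H) := by
    calc _ ≤ q ^ (n ^ 2) := p8_up (by omega)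
      _ ≤ (16 * n ^ 3 * k) ^ (n ^ 2) := Nat.pow_le_pow_left hk4 _
      _ = K0 * k ^ (n ^ 2) := by rw [mul_pow]
      _ ≤ K0 * ((q - 1) * Nat.card H) := Nat.mul_le_mul_left _ hmain
      _ = _ := by ring
  have h2 := Nat.le_of_mul_le_mul_left h1 (by omega)
  rw [← H.card_mul_index, mul_comm K0] at h2
  have h3 := Nat.le_of_mul_le_mul_left h2 Nat.card_pos
  exact p1_main hn H K0 h3 hq

lemma p9_burnside {F V : Type} [Field F] [AddCommGroup V] [Module F V] [Module.Finite F V]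
    (A : Subalgebra F (Module.End F V))
    (hirr : ∀ U : Submodule F V, (∀ a ∈ A, ∀ u ∈ U, a u ∈ U) → U = ⊥ ∨ U = ⊤)
    (z : Module.End F V) (hz : z ∈ A) (v : V) (hv : v ≠ 0) (hzv : z v = 0)
    (hker : Module.finrank F (LinearMap.ker z) ≤ 1) : A = ⊤ := by
  classical
  have hk : ∀ w, z w = 0 → ∃ c : F, c • v = w := by
    intro w hw
    rw [finrank_le_one_iff] at hker
    obtain ⟨b, hb⟩ := hker
    obtain ⟨c1, h1⟩ := hb ⟨v, hzv⟩
    obtain ⟨c2, h2⟩ := hb ⟨w, hw⟩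
    have h1' := congrArg Subtype.val h1
    have h2' := congrArg Subtype.val h2
    simp only [Submodule.coe_smul] at h1' h2'
    have hc1 : c1 ≠ 0 := by
      rintro rfl
      rw [zero_smul] at h1'; exact hv h1'.symm
    refine ⟨c2 * c1⁻¹, ?_⟩
    rw [← h1', ← h2', smul_smul, mul_assoc, inv_mul_cancel₀ hc1, mul_one]
  have hres : ∀ N : Submodule A V, N = ⊥ ∨ N = ⊤ := by
    intro N
    let U : Submodule F V :=
      { carrier := N
        add_mem' := fun ha hb => N.add_mem ha hb
        zero_mem' := N.zero_mem
        smul_mem' := by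
          intro c w hw
          have := N.smul_mem (algebraMap F A c) hw
          exact this }
    rcases hirr U (fun a ha u hu => N.smul_mem (⟨a, ha⟩ : A) hu) with h | h
    · left
      rw [Submodule.eq_bot_iff] at h ⊢
      exact h
    · right
      rw [Submodule.eq_top_iff'] at h ⊢
      exact h
  haveI : Nontrivial V := ⟨v, 0, hv⟩
  haveI : IsSimpleModule A V := by
    rw [isSimpleModule_iff]
    exact { eq_bot_or_eq_top := hres }
  have hφ : ∀ φ : Module.End A V, ∃ c : F, ∀ w, φ w = c • w := by
    intro φ
    obtain ⟨c, hc⟩ := hk (φ v) (by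
      have := φ.map_smul (⟨z, hz⟩ : A) v
      have h2 : (⟨z, hz⟩ : A) • v = 0 := hzv
      rw [h2, map_zero] at this
      exact this.symm)
    refine ⟨c, ?_⟩
    let N : Submodule A V :=
      { carrier := {w | φ w = c • w}
        add_mem' := by
          intro a b ha hb
          simp only [Set.mem_setOf_eq] at *
          rw [map_add, ha, hb, smul_add]
        zero_mem' := by simp
        smul_mem' := by
          intro a w hw
          simp only [Set.mem_setOf_eq] at *
          rw [map_smul, hw]
          exact map_smul (a : Module.End F V) c w }
    rcases hres N with h | h
    · exfalso
      have : v ∈ N := hc.symm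
      rw [h] at this
      exact hv (by simpa using this)
    · intro w
      have : w ∈ N := by rw [h]; trivial
      exact this
  rw [eq_top_iff]
  intro f _
  let f' : Module.End (Module.End A V) V :=
    { toFun := f
      map_add' := map_add f
      map_smul' := by
        intro φ m
        obtain ⟨c, hc⟩ := hφ φ
        simp only [Module.End.smul_def, RingHom.id_apply]
        rw [hc, hc, map_smul] }
  let b := Module.finBasis F V
  obtain ⟨r, hr⟩ := jacobson_density (R := A) f' (Finset.univ.image b)
  have : f = (r : Module.End F V) := by
    apply b.ext
    intro i
    exact hr (b i) (Finset.mem_image_of_mem _ (Finset.mem_univ i))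
  rw [this]
  exact r.2

lemma p9_CH {F V : Type} [Field F] [AddCommGroup V] [Module F V] [Module.Finite F V]
    (x : Module.End F V) (U : Submodule F V) (hU : ∀ u ∈ U, x u ∈ U) :
    ∃ p : Polynomial F, p.Monic ∧ p.natDegree = Module.finrank F U ∧
      ∀ u ∈ U, Polynomial.aeval x p u = 0 := by
  let xU : Module.End F U := x.restrict hU
  refine ⟨xU.charpoly, xU.charpoly_monic, xU.charpoly_natDegree, ?_⟩
  have h : ∀ (p : Polynomial F) (u : U), ((Polynomial.aeval xU p u : U) : V) = Polynomial.aeval x p u := by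
    intro p
    induction p using Polynomial.induction_on' with
    | add p q hp hq => intro u; simp [hp, hq]
    | monomial k a =>
      intro u
      simp only [Polynomial.aeval_monomial, Module.End.mul_apply, Module.algebraMap_end_apply, Submodule.coe_smul]
      congr 1
      induction k generalizing u with
      | zero => simp
      | succ k ih => rw [pow_succ, pow_succ, Module.End.mul_apply, Module.End.mul_apply, ih]; rfl
  intro u hu
  rw [← h _ ⟨u, hu⟩, LinearMap.aeval_self_charpoly]
  rfl

lemma p9_coprime {F V : Type} [Field F] [AddCommGroup V] [Module F V]
    (x : Module.End F V) (p r : Polynomial F) (h : IsCoprime p r) (u : V)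
    (h1 : Polynomial.aeval x p u = 0) (h2 : Polynomial.aeval x r u = 0) : u = 0 := by
  obtain ⟨a, b, hab⟩ := h
  have := congrArg (fun s => Polynomial.aeval x s u) hab
  simpa [h1, h2] using this.symm

lemma p9_caseA {F V : Type} [Field F] [AddCommGroup V] [Module F V] [Module.Finite F V]
    (x y : Module.End F V) (hx : Irreducible x.charpoly) (lam : F) (v : V) (hv : v ≠ 0)
    (hyv : y v = lam • v) (hker : Module.finrank F (LinearMap.ker (y - algebraMap F _ lam)) ≤ 1) :
    Algebra.adjoin F {x, y} = ⊤ := by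
  have hxA : x ∈ Algebra.adjoin F {x, y} := Algebra.subset_adjoin (by simp)
  have hyA : y ∈ Algebra.adjoin F {x, y} := Algebra.subset_adjoin (by simp)
  refine p9_burnside _ ?_ (y - algebraMap F _ lam) (Subalgebra.sub_mem _ hyA (Subalgebra.algebraMap_mem _ _)) v hv
    (by simp [hyv]) hker
  intro U hU
  obtain ⟨p, hp, hpd, hpu⟩ := p9_CH x U (hU x hxA)
  by_cases hd : Module.finrank F U = Module.finrank F V
  · right; exact Submodule.eq_top_of_finrank_eq hd
  · left
    have hlt : Module.finrank F U < Module.finrank F V := lt_of_le_of_ne U.finrank_le hd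
    have hc : IsCoprime x.charpoly p := by
      rw [hx.coprime_iff_not_dvd]
      intro hdvd
      have := Polynomial.natDegree_le_of_dvd hdvd hp.ne_zero
      rw [x.charpoly_natDegree] at this
      omega
    rw [Submodule.eq_bot_iff]
    intro u hu
    exact p9_coprime x _ _ hc u (by rw [LinearMap.aeval_self_charpoly]; rfl) (hpu u hu)

lemma p9_caseB {F V : Type} [Field F] [AddCommGroup V] [Module F V] [Module.Finite F V]
    (x y : Module.End F V) (f : Polynomial F) (a : F) (hf : Irreducible f)
    (hfd : f.natDegree + 1 = Module.finrank F V)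
    (hx : x.charpoly = f * (Polynomial.X - Polynomial.C a)) (hcop : ¬ f.IsRoot a)
    (hy : ∀ (lam : F) (v : V), y v = lam • v → v = 0) :
    Algebra.adjoin F {x, y} = ⊤ := by
  have hxA : x ∈ Algebra.adjoin F {x, y} := Algebra.subset_adjoin (by simp)
  have hyA : y ∈ Algebra.adjoin F {x, y} := Algebra.subset_adjoin (by simp)
  have hker : Module.finrank F (LinearMap.ker (x - algebraMap F _ a)) ≤ 1 := by
    have := LinearMap.finrank_eigenspace_le x a
    rw [Module.End.eigenspace_def] at this
    refine this.trans ?_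
    rw [hx, Polynomial.rootMultiplicity_mul, Polynomial.rootMultiplicity_X_sub_C_self,
      Polynomial.rootMultiplicity_eq_zero hcop]
    rw [← hx]; exact x.charpoly_monic.ne_zero
  obtain ⟨v, hv⟩ : ∃ v, x.HasEigenvector a v := by
    have : x.HasEigenvalue a := by
      rw [Module.End.hasEigenvalue_iff_isRoot_charpoly, hx]
      simp
    exact this.exists_hasEigenvector
  have hxv := hv.apply_eq_smul
  refine p9_burnside _ ?_ (x - algebraMap F _ a) (Subalgebra.sub_mem _ hxA (Subalgebra.algebraMap_mem _ _)) v hv.2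
    (by simp [hxv]) hker
  intro U hU
  obtain ⟨p, hp, hpd, hpu⟩ := p9_CH x U (hU x hxA)
  by_cases hd : Module.finrank F U = Module.finrank F V
  · right; exact Submodule.eq_top_of_finrank_eq hd
  have hlt : Module.finrank F U < Module.finrank F V := lt_of_le_of_ne U.finrank_le hd
  left
  rw [Submodule.eq_bot_iff]
  intro u hu
  by_cases hdvd : f ∣ p
  · exfalso
    have h1 := Polynomial.natDegree_le_of_dvd hdvd hp.ne_zero
    obtain ⟨w, hw⟩ : ∃ w, w ∉ U := by
      by_contra hcon
      push Not at hcon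
      apply hd
      rw [(Submodule.eq_top_iff').mpr hcon, finrank_top]
    have htop : U ⊔ Submodule.span F {w} = ⊤ := by
      apply Submodule.eq_top_of_finrank_eq
      have h2 : U < U ⊔ Submodule.span F {w} := by
        refine lt_of_le_of_ne le_sup_left ?_
        intro h
        apply hw
        rw [h]
        exact Submodule.mem_sup_right (Submodule.mem_span_singleton_self w)
      have h3 := Submodule.finrank_lt_finrank_of_lt h2
      have h4 := (U ⊔ Submodule.span F {w}).finrank_le
      omega
    have hdec : ∀ v, ∃ u ∈ U, ∃ c : F, v = u + c • w := by
      intro v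
      have : v ∈ U ⊔ Submodule.span F {w} := by rw [htop]; trivial
      rw [Submodule.mem_sup] at this
      obtain ⟨u, hu, s, hs, rfl⟩ := this
      obtain ⟨c, rfl⟩ := Submodule.mem_span_singleton.mp hs
      exact ⟨u, hu, c, rfl⟩
    obtain ⟨u0, hu0, μ, hμ⟩ := hdec (y w)
    have hinj : Function.Injective (y - algebraMap F (Module.End F V) μ) := by
      rw [← LinearMap.ker_eq_bot, Submodule.eq_bot_iff]
      intro v hv
      apply hy μ v
      rw [LinearMap.mem_ker] at hv
      simpa [sub_eq_zero] using hv
    have hsurj := LinearMap.surjective_of_injective hinj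
    obtain ⟨s, hs⟩ := hsurj w
    obtain ⟨u1, hu1, c, rfl⟩ := hdec s
    apply hw
    rw [← hs]
    have e : (y - algebraMap F (Module.End F V) μ) (u1 + c • w) = (y u1 - μ • u1) + c • u0 := by
      simp only [LinearMap.sub_apply, map_add, map_smul, Module.algebraMap_end_apply, hμ]
      module
    rw [e]
    exact U.add_mem (U.sub_mem (hU y hyA u1 hu1) (U.smul_mem _ hu1)) (U.smul_mem _ hu0)
  · have hc : IsCoprime f p := by rwa [hf.coprime_iff_not_dvd]
    have hUk : ∀ u ∈ U, x u = a • u := by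
      intro u hu
      have h1 : Polynomial.aeval x (Polynomial.X - Polynomial.C a) u = 0 := by
        apply p9_coprime x _ _ hc
        · rw [← Module.End.mul_apply, ← map_mul, ← hx, LinearMap.aeval_self_charpoly]; rfl
        · rw [← Module.End.mul_apply, ← map_mul, mul_comm, map_mul, Module.End.mul_apply, hpu u hu, map_zero]
      simpa [sub_eq_zero] using h1
    by_contra hu0
    have h1 : y u ∈ LinearMap.ker (x - algebraMap F (Module.End F V) a) := by
      rw [LinearMap.mem_ker]
      simp [hUk _ (hU y hyA u hu)]
    have h2 : u ∈ LinearMap.ker (x - algebraMap F (Module.End F V) a) := by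
      rw [LinearMap.mem_ker]
      simp [hUk _ hu]
    rw [finrank_le_one_iff] at hker
    obtain ⟨b, hb⟩ := hker
    obtain ⟨c1, e1⟩ := hb ⟨_, h1⟩
    obtain ⟨c2, e2⟩ := hb ⟨_, h2⟩
    have e1' := congrArg Subtype.val e1
    have e2' := congrArg Subtype.val e2
    simp only [Submodule.coe_smul] at e1' e2'
    have hc2 : c2 ≠ 0 := by
      rintro rfl
      rw [zero_smul] at e2'; exact hu0 e2'.symm
    apply hu0
    apply hy (c1 * c2⁻¹) u
    rw [← e1']
    conv_rhs => rw [← e2', smul_smul, mul_assoc, inv_mul_cancel₀ hc2, mul_one]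

lemma p10_conj {n : ℕ} {F : Type} [Field F] (x g : Matrix.SpecialLinearGroup (Fin n) F) :
    ((g * x * g⁻¹ : Matrix.SpecialLinearGroup (Fin n) F) : Matrix (Fin n) (Fin n) F).charpoly =
      (x : Matrix (Fin n) (Fin n) F).charpoly := by
  have h1 : ((g * x * g⁻¹ : Matrix.SpecialLinearGroup (Fin n) F) : Matrix (Fin n) (Fin n) F) =
      ((g * x : Matrix.SpecialLinearGroup (Fin n) F) : Matrix (Fin n) (Fin n) F) *
      ((g⁻¹ : Matrix.SpecialLinearGroup (Fin n) F) : Matrix (Fin n) (Fin n) F) :=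
    Matrix.SpecialLinearGroup.coe_mul _ _
  rw [h1, Matrix.charpoly_mul_comm, ← Matrix.SpecialLinearGroup.coe_mul, inv_mul_cancel_left]

lemma p10_inv {G : Type} [Group G] (x y : G) (h : ∀ g : G, Subgroup.closure {g * x * g⁻¹, y} = ⊤) :
    InvGen x y := by
  intro g k
  have h1 := h (k⁻¹ * g)
  have h2 := congrArg (Subgroup.map (MulAut.conj k).toMonoidHom) h1
  rw [MonoidHom.map_closure, Set.image_pair] at h2
  rw [Subgroup.map_top_of_surjective _ (MulAut.conj k).surjective] at h2
  rw [← h2]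
  congr 2
  simp [mul_assoc]

lemma p10_adj {n : ℕ} {F : Type} [Field F] (x y : Matrix (Fin n) (Fin n) F)
    (h : Algebra.adjoin F {(Matrix.toLin' x : Module.End F (Fin n → F)), (Matrix.toLin' y : Module.End F (Fin n → F))} = ⊤) :
    Algebra.adjoin F {x, y} = ⊤ := by
  let e : Matrix (Fin n) (Fin n) F ≃ₐ[F] Module.End F (Fin n → F) := Matrix.toLinAlgEquiv'
  have h1 : (Algebra.adjoin F {x, y}).map (e : Matrix (Fin n) (Fin n) F →ₐ[F] Module.End F (Fin n → F)) = ⊤ := by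
    rw [AlgHom.map_adjoin, Set.image_pair]
    exact h
  rw [eq_top_iff]
  intro z _
  have : e z ∈ (Algebra.adjoin F {x, y}).map (e : Matrix (Fin n) (Fin n) F →ₐ[F] Module.End F (Fin n → F)) := by
    rw [h1]; trivial
  obtain ⟨z', hz', hzz⟩ := this
  have : z' = z := e.injective hzz
  rwa [← this]

lemma p10_A {n : ℕ} (hn : 2 ≤ n) {F : Type} [Field F] [Fintype F] (x y : Matrix.SpecialLinearGroup (Fin n) F)
    (hq : ((16 * n ^ 3) ^ (n ^ 2)).factorial < Fintype.card F)
    (hirr : Irreducible (x : Matrix (Fin n) (Fin n) F).charpoly)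
    (hord : Fintype.card F ^ (n - 1) ≤ 2 * orderOf x)
    (htr : (y : Matrix (Fin n) (Fin n) F).trace ≠ 0) (lam : F) (v : Fin n → F) (hv : v ≠ 0)
    (hyv : Matrix.toLin' (y : Matrix (Fin n) (Fin n) F) v = lam • v)
    (hker : Module.finrank F (LinearMap.ker ((Matrix.toLin' (y : Matrix (Fin n) (Fin n) F) : Module.End F (Fin n → F)) - algebraMap F _ lam)) ≤ 1) :
    InvGen x y := by
  apply p10_inv
  intro g
  have hc := p10_conj x g
  apply p8_main hn _ _ _ _ _ htr hq
  · rw [hc]; exact PerfectField.separable_of_irreducible hirr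
  · have : orderOf (g * x * g⁻¹) = orderOf x := (SemiconjBy.orderOf_eq g (by simp [SemiconjBy])).symm
    rw [this]; exact hord
  · apply p10_adj
    refine p9_caseA _ _ ?_ lam v hv hyv hker
    rw [Matrix.charpoly_toLin', hc]; exact hirr

lemma p10_B {n : ℕ} (hn : 2 ≤ n) {F : Type} [Field F] [Fintype F] (x y : Matrix.SpecialLinearGroup (Fin n) F)
    (hq : ((16 * n ^ 3) ^ (n ^ 2)).factorial < Fintype.card F)
    (f : Polynomial F) (a : F) (hf : Irreducible f)
    (hfd : f.natDegree + 1 = n)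
    (hx : (x : Matrix (Fin n) (Fin n) F).charpoly = f * (Polynomial.X - Polynomial.C a)) (hcop : ¬ f.IsRoot a)
    (hord : Fintype.card F ^ (n - 1) ≤ 2 * orderOf x)
    (htr : (y : Matrix (Fin n) (Fin n) F).trace ≠ 0)
    (hy : ∀ (lam : F) (v : Fin n → F), Matrix.toLin' (y : Matrix (Fin n) (Fin n) F) v = lam • v → v = 0) :
    InvGen x y := by
  apply p10_inv
  intro g
  have hc := p10_conj x g
  apply p8_main hn _ _ _ _ _ htr hq
  · rw [hc, hx]
    refine (PerfectField.separable_of_irreducible hf).mul Polynomial.separable_X_sub_C ?_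
    rw [isCoprime_comm, (Polynomial.irreducible_X_sub_C a).coprime_iff_not_dvd, Polynomial.dvd_iff_isRoot]
    exact hcop
  · have : orderOf (g * x * g⁻¹) = orderOf x := (SemiconjBy.orderOf_eq g (by simp [SemiconjBy])).symm
    rw [this]; exact hord
  · apply p10_adj
    refine p9_caseB _ _ f a hf (by simpa using hfd) ?_ hcop hy
    rw [Matrix.charpoly_toLin', hc]; exact hx

theorem p11_pow {F : Type*} [Field F] {n : ℕ} (x : Matrix.SpecialLinearGroup (Fin n) F) (k : ℕ) :
    x ^ k = 1 ↔ (x : Matrix (Fin n) (Fin n) F) ^ k = 1 := by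
  constructor
  · intro h
    rw [← Matrix.SpecialLinearGroup.coe_pow, h, Matrix.SpecialLinearGroup.coe_one]
  · intro h
    apply Subtype.ext
    rw [Matrix.SpecialLinearGroup.coe_pow, h, Matrix.SpecialLinearGroup.coe_one]

theorem p11_deg {F E : Type*} [Field F] [Fintype F] [Field E] [Finite E] [Algebra F E] (m : ℕ)
    (hm : Module.finrank F E = m) (s : E) (hs : Fintype.card F ^ (m-1) ≤ orderOf s) (hs0 : s ≠ 0) :
    (minpoly F s).natDegree = m := by
  have : Module.Finite F E := Module.Finite.of_finite
  have hint : IsIntegral F s := IsIntegral.of_finite F s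
  have hle : (minpoly F s).natDegree ≤ m := hm ▸ minpoly.natDegree_le s
  by_contra hne
  have hlt : (minpoly F s).natDegree ≤ m - 1 := by omega
  have hcard : Nat.card (IntermediateField.adjoin F {s}) = Fintype.card F ^ (minpoly F s).natDegree := by
    rw [← IntermediateField.adjoin.finrank hint, Module.natCard_eq_pow_finrank (K := F), Nat.card_eq_fintype_card]
  have hfo : 0 < orderOf s := by
    have : IsOfFinOrder s := by
      have := isOfFinOrder_of_finite (Units.mk0 s hs0)
      exact (Units.isOfFinOrder_val).2 this
    exact orderOf_pos_iff.2 this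
  have hinj : Function.Injective (fun i : Option (Fin (orderOf s)) => (match i with
      | none => (0 : IntermediateField.adjoin F {s})
      | some i => (IntermediateField.AdjoinSimple.gen F s) ^ (i:ℕ))) := by
    rintro (_|i) (_|j) h
    · rfl
    · exfalso
      have := congrArg (algebraMap _ E) h
      simp at this
      exact absurd this.symm (pow_ne_zero _ hs0)
    · exfalso
      have := congrArg (algebraMap _ E) h
      simp at this
      exact absurd this.1 hs0
    · have := congrArg (algebraMap _ E) h
      simp at this
      have := pow_injOn_Iio_orderOf (x := s) (by simp) (by simp) this
      congr 1
      exact Fin.ext this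
  have h2 := Nat.card_le_card_of_injective _ hinj
  rw [hcard] at h2
  simp at h2
  have h3 : Fintype.card F ^ (minpoly F s).natDegree ≤ Fintype.card F ^ (m-1) :=
    Nat.pow_le_pow_right Fintype.card_pos hlt
  omega

theorem p11_charpoly {F E : Type*} [Field F] [Fintype F] [Field E] [Finite E] [Algebra F E] (m : ℕ)
    (b : Module.Basis (Fin m) F E) (s : E) (hs : Fintype.card F ^ (m-1) ≤ orderOf s) (hs0 : s ≠ 0) :
    (Algebra.leftMulMatrix b s).charpoly = minpoly F s := by
  have hm : Module.finrank F E = m := by simpa using Module.finrank_eq_card_basis b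
  have hd := p11_deg m hm s hs hs0
  have hint : IsIntegral F s := IsIntegral.of_finite F s
  apply Polynomial.eq_of_monic_of_dvd_of_natDegree_le (minpoly.monic hint) (Matrix.charpoly_monic _)
  · apply minpoly.dvd
    apply Algebra.leftMulMatrix_injective b
    rw [← Polynomial.aeval_algHom_apply, map_zero]
    exact Matrix.aeval_self_charpoly _
  · rw [hd]; simp

theorem p11_gen (F E : Type*) [Field F] [Fintype F] [Field E] [Finite E] [Algebra F E] (m : ℕ)
    (hm : Module.finrank F E = m) : ∃ w : E, w ≠ 0 ∧ orderOf w = Fintype.card F ^ m - 1 := by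
  obtain ⟨w, hw⟩ := IsCyclic.exists_generator (α := Eˣ)
  refine ⟨w, w.ne_zero, ?_⟩
  rw [orderOf_units, orderOf_eq_card_of_forall_mem_zpowers hw, Nat.card_units,
    Module.natCard_eq_pow_finrank (K := F), hm, Nat.card_eq_fintype_card]

theorem p11_ext (F : Type) [Field F] [Fintype F] (m : ℕ) (hm : 1 ≤ m) :
    ∃ (E : Type) (_ : Field E) (_ : Finite E) (_ : Algebra F E), Module.finrank F E = m := by
  obtain ⟨p, hp⟩ := CharP.exists F
  have : Fact p.Prime := ⟨CharP.char_is_prime F p⟩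
  have : NeZero m := ⟨by omega⟩
  exact ⟨FiniteField.Extension F p m, inferInstance, inferInstance, inferInstance,
    FiniteField.finrank_extension F p m⟩

theorem p11_x1 (F : Type) [Field F] [Fintype F] (n : ℕ) (hn : 2 ≤ n) :
    ∃ x : Matrix.SpecialLinearGroup (Fin n) F,
      orderOf x = (Fintype.card F ^ n - 1) / (Fintype.card F - 1) ∧
      Irreducible (x : Matrix (Fin n) (Fin n) F).charpoly ∧
      Fintype.card F ^ (n-1) ≤ 2 * orderOf x := by
  obtain ⟨E, _, _, _, hE⟩ := p11_ext F n (by omega)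
  have : Module.Finite F E := Module.Finite.of_finite
  obtain ⟨w, hw0, hw⟩ := p11_gen F E n hE
  have hq : 2 ≤ Fintype.card F := Fintype.one_lt_card
  have hdvd : Fintype.card F - 1 ∣ Fintype.card F ^ n - 1 := by
    simpa using Nat.sub_dvd_pow_sub_pow (Fintype.card F) 1 n
  have hs : orderOf (w ^ (Fintype.card F - 1)) = (Fintype.card F ^ n - 1) / (Fintype.card F - 1) := by
    rw [orderOf_pow_of_dvd (by omega) (by rw [hw]; exact hdvd), hw]
  have hge : Fintype.card F ^ (n-1) ≤ (Fintype.card F ^ n - 1) / (Fintype.card F - 1) := by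
    rw [Nat.le_div_iff_mul_le (by omega)]
    have h1 : Fintype.card F ^ n = Fintype.card F ^ (n-1) * Fintype.card F := by
      rw [← pow_succ]; congr 1; omega
    have h2 : 1 ≤ Fintype.card F ^ (n-1) := Nat.one_le_pow _ _ (by omega)
    rw [h1, Nat.mul_sub, mul_one]
    omega
  let b := Module.finBasisOfFinrankEq F E hE
  have hdet : (Algebra.leftMulMatrix b (w ^ (Fintype.card F - 1))).det = 1 := by
    rw [← Algebra.norm_eq_matrix_det, map_pow]
    apply FiniteField.pow_card_sub_one_eq_one
    exact (Algebra.norm_ne_zero_iff).2 hw0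
  obtain ⟨x, hx⟩ : ∃ x : Matrix.SpecialLinearGroup (Fin n) F,
      (x : Matrix (Fin n) (Fin n) F) = Algebra.leftMulMatrix b (w ^ (Fintype.card F - 1)) := ⟨⟨_, hdet⟩, rfl⟩
  have hord : orderOf x = (Fintype.card F ^ n - 1) / (Fintype.card F - 1) := by
    rw [← hs, ← orderOf_injective (Algebra.leftMulMatrix b).toMonoidHom (Algebra.leftMulMatrix_injective b)]
    rw [orderOf_eq_orderOf_iff]
    intro k
    rw [p11_pow, hx]
    rfl
  refine ⟨x, hord, ?_, ?_⟩
  · have := p11_charpoly n b (w ^ (Fintype.card F - 1)) (by rw [hs]; exact hge) (pow_ne_zero _ hw0)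
    rw [hx, this]
    exact minpoly.irreducible (IsIntegral.of_finite F _)
  · rw [hord]; omega

theorem p11_x2 (F : Type) [Field F] [Fintype F] (n : ℕ) (hn : 2 ≤ n) :
    ∃ x : Matrix.SpecialLinearGroup (Fin n) F,
      orderOf x = Fintype.card F ^ (n - 1) - 1 ∧
      (3 < Fintype.card F → ∃ (f : Polynomial F) (a : F), Irreducible f ∧ f.natDegree + 1 = n ∧
        (x : Matrix (Fin n) (Fin n) F).charpoly = f * (Polynomial.X - Polynomial.C a) ∧
        ¬ f.IsRoot a ∧ Fintype.card F ^ (n-1) ≤ 2 * orderOf x) := by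
  obtain ⟨m, rfl⟩ : ∃ m, n = m + 1 := ⟨n-1, by omega⟩
  obtain ⟨E, _, _, _, hE⟩ := p11_ext F m (by omega)
  have : Module.Finite F E := Module.Finite.of_finite
  obtain ⟨w, hw0, hw⟩ := p11_gen F E m hE
  have hq : 2 ≤ Fintype.card F := Fintype.one_lt_card
  let b := Module.finBasisOfFinrankEq F E hE
  have hN : Algebra.norm F w ≠ 0 := (Algebra.norm_ne_zero_iff).2 hw0
  set c : F := (Algebra.norm F w)⁻¹ with hc
  let φ : E →* Matrix (Fin m) (Fin m) F := (Algebra.leftMulMatrix b).toMonoidHom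
  let M : Matrix (Fin (m+1)) (Fin (m+1)) F :=
    Matrix.reindexAlgEquiv F F (finSumFinEquiv (m := m) (n := 1))
      (Matrix.fromBlocks (Algebra.leftMulMatrix b w) 0 0 (Matrix.diagonal fun _ : Fin 1 => c))
  have hdet : M.det = 1 := by
    simp only [M]
    rw [Matrix.det_reindexAlgEquiv, Matrix.det_fromBlocks_zero₁₂, ← Algebra.norm_eq_matrix_det]
    simp [hc, hN]
  obtain ⟨x, hx⟩ : ∃ x : Matrix.SpecialLinearGroup (Fin (m+1)) F,
      (x : Matrix (Fin (m+1)) (Fin (m+1)) F) = M := ⟨⟨_, hdet⟩, rfl⟩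
  have hord : orderOf x = Fintype.card F ^ m - 1 := by
    rw [← hw, orderOf_eq_orderOf_iff]
    intro k
    rw [p11_pow, hx]
    simp only [M]
    rw [← map_pow, Matrix.fromBlocks_diagonal_pow, ← map_pow, Matrix.diagonal_pow]
    rw [map_eq_one_iff _ (AlgEquiv.injective _), ← Matrix.fromBlocks_one, Matrix.fromBlocks_inj]
    constructor
    · rintro ⟨h, -⟩
      exact (map_eq_one_iff _ (Algebra.leftMulMatrix_injective b)).1 h
    · intro h
      refine ⟨by rw [h, map_one], rfl, rfl, ?_⟩
      have : c ^ k = 1 := by rw [hc, inv_pow, ← map_pow, h, map_one, inv_one]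
      ext i j
      fin_cases i; fin_cases j
      simp [this]
  have hpow : Fintype.card F ^ m = Fintype.card F ^ (m-1) * Fintype.card F := by
    rw [← pow_succ]; congr 1; omega
  have h2 : 1 ≤ Fintype.card F ^ (m-1) := Nat.one_le_pow _ _ (by omega)
  have hge : Fintype.card F ^ (m-1) ≤ orderOf w := by
    rw [hw, hpow]
    have : Fintype.card F ^ (m-1) * 2 ≤ Fintype.card F ^ (m-1) * Fintype.card F := Nat.mul_le_mul_left _ hq
    omega
  refine ⟨x, hord, fun hq3 => ?_⟩
  have hirr : Irreducible (minpoly F w) := minpoly.irreducible (IsIntegral.of_finite F _)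
  have hd := p11_deg m hE w hge hw0
  refine ⟨minpoly F w, c, hirr, by rw [hd], ?_, ?_, ?_⟩
  · rw [hx]
    simp only [M]
    rw [Matrix.reindexAlgEquiv_apply, Matrix.charpoly_reindex, Matrix.charpoly_fromBlocks_zero₁₂, p11_charpoly m b w hge hw0]
    congr 1
    simp [Matrix.charpoly, Matrix.charmatrix]
  · intro hr
    have h1 := Polynomial.natDegree_eq_of_degree_eq_some (Polynomial.degree_eq_one_of_irreducible_of_root hirr hr)
    have hm1 : m = 1 := hd.symm.trans h1
    -- w lies in F
    have hbij : Function.Surjective (algebraMap F E) := by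
      have : (⊥ : Subalgebra F E) = ⊤ := Subalgebra.bot_eq_top_of_finrank_eq_one (by rw [hE, hm1])
      exact Algebra.surjective_algebraMap_iff.2 this.symm
    obtain ⟨w0, rfl⟩ := hbij w
    rw [minpoly.eq_X_sub_C] at hr
    have h3 : c = w0 := by
      have : c - w0 = 0 := by simpa [Polynomial.IsRoot] using hr
      exact sub_eq_zero.1 this
    rw [Algebra.norm_algebraMap, hE, hm1, pow_one] at hc hN
    have h4 : w0 ^ 2 = 1 := by
      rw [sq]; nth_rewrite 1 [← h3]; rw [hc]; exact inv_mul_cancel₀ hN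
    have h5 : orderOf (algebraMap F E w0) ≤ 2 := by
      apply orderOf_le_of_pow_eq_one (by norm_num)
      rw [← map_pow, h4, map_one]
    rw [hw, hm1] at h5
    simp at h5
    omega
  · rw [hord]
    show Fintype.card F ^ m ≤ _
    have : 1 * 2 ≤ Fintype.card F ^ (m-1) * Fintype.card F := Nat.mul_le_mul h2 hq
    omega

theorem p12_abs {F G : Type*} [Field F] [Fintype F] [Group G] [Finite G]
    (T : F → G) (hT0 : T 0 = 1) (φ ψ : G → F)
    (hφ : ∀ t y, φ (T t * y) = φ y + t * ψ y) (hψ : ∀ t y, ψ (T t * y) = ψ y) :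
    Fintype.card F * {y : G | φ y = 0 ∧ ψ y ≠ 0}.ncard ≤ Nat.card G := by
  have h := Nat.card_le_card_of_injective
    (fun p : F × {y : G | φ y = 0 ∧ ψ y ≠ 0} => T p.1 * p.2.1) (by
      rintro ⟨t, y, hy, hy'⟩ ⟨s, z, hz, hz'⟩ h
      simp only at h
      have h1 := congrArg ψ h
      rw [hψ, hψ] at h1
      have h2 := congrArg φ h
      rw [hφ, hφ, hy, hz, zero_add, zero_add, ← h1] at h2
      have h3 : t = s := mul_right_cancel₀ hy' h2
      subst h3
      have := mul_left_cancel h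
      subst this
      rfl)
  rw [Nat.card_prod, Nat.card_eq_fintype_card, Nat.card_coe_set_eq] at h
  exact h

def p12_T {F : Type*} [Field F] {n : ℕ} (i j : Fin n) (hij : i ≠ j) (t : F) :
    Matrix.SpecialLinearGroup (Fin n) F :=
  ⟨Matrix.transvection i j t, Matrix.det_transvection_of_ne i j hij t⟩

theorem p12_Tval {F : Type*} [Field F] {n : ℕ} (i j : Fin n) (hij : i ≠ j) (t : F)
    (y : Matrix.SpecialLinearGroup (Fin n) F) (a b : Fin n) :
    ((p12_T i j hij t * y : Matrix.SpecialLinearGroup (Fin n) F) : Matrix (Fin n) (Fin n) F) a b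
      = y a b + if a = i then t * y j b else 0 := by
  rw [Matrix.SpecialLinearGroup.coe_mul]
  show (Matrix.transvection i j t * (y : Matrix (Fin n) (Fin n) F)) a b = _
  split_ifs with h
  · subst h
    rw [Matrix.transvection_mul_apply_same]
  · rw [Matrix.transvection_mul_apply_of_ne _ _ _ _ h, add_zero]

theorem p12_T0 {F : Type*} [Field F] {n : ℕ} (i j : Fin n) (hij : i ≠ j) :
    p12_T i j hij (0 : F) = 1 := by
  apply Subtype.ext
  show Matrix.transvection i j (0:F) = _
  rw [Matrix.transvection_zero]; rfl

theorem p12_tr1 {F : Type*} [Field F] [Fintype F] {n : ℕ} (i j : Fin n) (hij : i ≠ j) :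
    Fintype.card F * {y : Matrix.SpecialLinearGroup (Fin n) F | (y : Matrix (Fin n) (Fin n) F).trace = 0 ∧ y j i ≠ 0}.ncard
      ≤ Nat.card (Matrix.SpecialLinearGroup (Fin n) F) := by
  apply p12_abs (p12_T i j hij) (p12_T0 i j hij) (fun y => (y : Matrix (Fin n) (Fin n) F).trace) (fun y => y j i)
  · intro t y
    simp only [Matrix.trace, Matrix.diag, p12_Tval, Finset.sum_add_distrib]
    simp
  · intro t y
    simp [p12_Tval, hij.symm]

theorem p12_tr2 {F : Type*} [Field F] [Fintype F] {n : ℕ} (i j : Fin n) (hij : i ≠ j) :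
    Fintype.card F * {y : Matrix.SpecialLinearGroup (Fin n) F | y i j = 0 ∧ y j j ≠ 0}.ncard
      ≤ Nat.card (Matrix.SpecialLinearGroup (Fin n) F) := by
  apply p12_abs (p12_T i j hij) (p12_T0 i j hij) (fun y => y i j) (fun y => y j j)
  · intro t y
    simp [p12_Tval]
  · intro t y
    simp [p12_Tval, hij.symm]

theorem p12_tr {F : Type*} [Field F] [Fintype F] {n : ℕ} (hn : 2 ≤ n) :
    Fintype.card F * {y : Matrix.SpecialLinearGroup (Fin n) F | (y : Matrix (Fin n) (Fin n) F).trace = 0}.ncard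
      ≤ (n^2+1) * Nat.card (Matrix.SpecialLinearGroup (Fin n) F) := by
  classical
  let i0 : Fin n := ⟨0, by omega⟩
  let i1 : Fin n := ⟨1, by omega⟩
  have h01 : i0 ≠ i1 := by simp [i0, i1]
  let S : Fin n × Fin n → Set (Matrix.SpecialLinearGroup (Fin n) F) := fun p =>
    {y | p.1 ≠ p.2 ∧ (y : Matrix (Fin n) (Fin n) F).trace = 0 ∧ y p.2 p.1 ≠ 0}
  have hS : ∀ p, Fintype.card F * (S p).ncard ≤ Nat.card (Matrix.SpecialLinearGroup (Fin n) F) := by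
    intro p
    by_cases hp : p.1 = p.2
    · have : S p = ∅ := by ext y; simp [S, hp]
      rw [this]; simp
    · have := p12_tr1 (F := F) p.1 p.2 hp
      have h2 : S p = {y : Matrix.SpecialLinearGroup (Fin n) F | (y : Matrix (Fin n) (Fin n) F).trace = 0 ∧ y p.2 p.1 ≠ 0} := by
        ext y; simp [S, hp]
      rw [h2]; exact this
  have hsub : {y : Matrix.SpecialLinearGroup (Fin n) F | (y : Matrix (Fin n) (Fin n) F).trace = 0} ⊆
      (⋃ p, S p) ∪ {y | y i0 i1 = 0 ∧ y i1 i1 ≠ 0} := by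
    intro y hy
    by_cases h : ∃ p : Fin n × Fin n, p.1 ≠ p.2 ∧ y p.2 p.1 ≠ 0
    · obtain ⟨p, hp, hp'⟩ := h
      left
      exact Set.mem_iUnion.2 ⟨p, hp, hy, hp'⟩
    · right
      push Not at h
      refine ⟨h (i1, i0) h01.symm, fun h11 => ?_⟩
      have : (y : Matrix (Fin n) (Fin n) F).det = 0 := by
        apply Matrix.det_eq_zero_of_row_eq_zero i1
        intro k
        by_cases hk : k = i1
        · rw [hk]; exact h11
        · exact h (k, i1) hk
      rw [y.2] at this
      exact one_ne_zero this
  have h1 := Set.ncard_le_ncard hsub (Set.toFinite _)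
  have h2 := Set.ncard_union_le (⋃ p, S p) {y : Matrix.SpecialLinearGroup (Fin n) F | y i0 i1 = 0 ∧ y i1 i1 ≠ 0}
  have h3 := Set.ncard_iUnion_le_of_fintype S
  have h4 : Fintype.card F * ∑ p, (S p).ncard ≤ n^2 * Nat.card (Matrix.SpecialLinearGroup (Fin n) F) := by
    rw [Finset.mul_sum]
    refine (Finset.sum_le_sum (fun p _ => hS p)).trans ?_
    simp [sq]
  have h5 := p12_tr2 (F := F) i0 i1 h01
  calc _ ≤ Fintype.card F * ((∑ p, (S p).ncard) + {y : Matrix.SpecialLinearGroup (Fin n) F | y i0 i1 = 0 ∧ y i1 i1 ≠ 0}.ncard) :=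
        Nat.mul_le_mul_left _ (by omega)
    _ ≤ _ := by rw [mul_add, add_mul, one_mul]; omega

theorem p12_ker {F : Type*} [Field F] {n : ℕ} (W : Submodule F (Fin n → F)) (h : 2 ≤ Module.finrank F W) :
    ∃ i j : Fin n, i ≠ j ∧ ∃ u ∈ W, ∃ v ∈ W, u i = 1 ∧ u j = 0 ∧ v i = 0 ∧ v j = 1 := by
  obtain ⟨f, hf⟩ := exists_linearIndependent_of_le_finrank (R := F) h
  have hf2 : LinearIndependent F ![f 0, f 1] := by
    convert hf using 1
    ext k; fin_cases k <;> rfl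
  have h0 : f 0 ≠ 0 := hf.ne_zero 0
  rw [LinearIndependent.pair_iff' h0] at hf2
  have h0' : (f 0 : Fin n → F) ≠ 0 := fun h => h0 (Subtype.ext h)
  obtain ⟨i, hi⟩ := Function.ne_iff.1 h0'
  simp only [Pi.zero_apply] at hi
  set a : Fin n → F := (f 0).1 with ha
  set b : Fin n → F := (f 1).1 with hb
  have haW : a ∈ W := (f 0).2
  have hbW : b ∈ W := (f 1).2
  have hc : b - (b i / a i) • a ≠ 0 := by
    intro h
    apply hf2 (b i / a i)
    apply Subtype.ext
    exact (sub_eq_zero.1 h).symm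
  have hcW : b - (b i / a i) • a ∈ W := W.sub_mem hbW (W.smul_mem _ haW)
  have hci : (b - (b i / a i) • a) i = 0 := by simp [hi]
  generalize b - (b i / a i) • a = c at hc hcW hci
  obtain ⟨j, hj⟩ := Function.ne_iff.1 hc
  simp only [Pi.zero_apply] at hj
  refine ⟨i, j, ?_, (a i)⁻¹ • a - ((a i)⁻¹ * a j * (c j)⁻¹) • c, W.sub_mem (W.smul_mem _ haW) (W.smul_mem _ hcW),
    (c j)⁻¹ • c, W.smul_mem _ hcW, ?_, ?_, ?_, ?_⟩
  · rintro rfl; exact hj hci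
  · simp [hci, hi]
  · simp [hj]
  · simp [hci]
  · simp [hj]

theorem p12_ar (q n N D : ℕ) (hn : 2 ≤ n) (hq : 2 ≤ q) (h5 : q ^ (n^2) ≤ 2^n * ((q-1)*N))
    (h4 : D ≤ q * (n*n) * q ^ ((n+2)*(n-2))) : q * D ≤ (n^2*2^n) * N := by
  obtain ⟨m, rfl⟩ : ∃ m, n = m + 2 := ⟨n-2, by omega⟩
  have e1 : (m+2)^2 = (m+2+2)*(m+2-2) + 4 := by simp; ring
  generalize (m+2+2)*(m+2-2) = k at *
  rw [e1] at h5
  have h6 : q * q^(k+3) ≤ q * (2^(m+2) * N) := by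
    calc _ = q ^ (k+4) := by ring
      _ ≤ _ := h5
      _ ≤ 2^(m+2) * (q * N) := Nat.mul_le_mul_left _ (Nat.mul_le_mul_right _ (by omega))
      _ = _ := by ring
  have h7 := Nat.le_of_mul_le_mul_left h6 (by omega)
  calc _ ≤ q * (q * ((m+2)*(m+2)) * q ^ k) := Nat.mul_le_mul_left _ h4
    _ = (m+2)^2 * q ^ (k+2) := by ring
    _ ≤ (m+2)^2 * q ^ (k+3) := by
        apply Nat.mul_le_mul_left
        exact Nat.pow_le_pow_right (by omega) (by omega)
    _ ≤ (m+2)^2 * (2^(m+2) * N) := Nat.mul_le_mul_left _ h7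
    _ = _ := by ring

theorem p12_B {F : Type*} [Field F] [Fintype F] {n : ℕ} (hn : 2 ≤ n) (lam : F) (i j : Fin n) (hij : i ≠ j) :
    {y : Matrix.SpecialLinearGroup (Fin n) F | ∃ u v : Fin n → F,
      (y : Matrix (Fin n) (Fin n) F).mulVec u = lam • u ∧ (y : Matrix (Fin n) (Fin n) F).mulVec v = lam • v ∧
      u i = 1 ∧ u j = 0 ∧ v i = 0 ∧ v j = 1}.ncard ≤ Fintype.card F ^ ((n+2)*(n-2)) := by
  classical
  let K := {k : Fin n // k ≠ i ∧ k ≠ j}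
  have hK : Fintype.card K = n - 2 := by
    have h1 : Fintype.card K = (Finset.univ.filter (fun k : Fin n => k ≠ i ∧ k ≠ j)).card := Fintype.card_subtype _
    have h2 : (Finset.univ.filter (fun k : Fin n => k ≠ i ∧ k ≠ j)) = Finset.univ \ {i, j} := by
      ext k; simp
    rw [h1, h2, Finset.card_sdiff_of_subset (Finset.subset_univ _), Finset.card_pair hij]
    simp
  set S := {y : Matrix.SpecialLinearGroup (Fin n) F | ∃ u v : Fin n → F,
      (y : Matrix (Fin n) (Fin n) F).mulVec u = lam • u ∧ (y : Matrix (Fin n) (Fin n) F).mulVec v = lam • v ∧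
      u i = 1 ∧ u j = 0 ∧ v i = 0 ∧ v j = 1} with hS
  have hch : ∀ y : S, ∃ u v : Fin n → F,
      (y.1 : Matrix (Fin n) (Fin n) F).mulVec u = lam • u ∧ (y.1 : Matrix (Fin n) (Fin n) F).mulVec v = lam • v ∧
      u i = 1 ∧ u j = 0 ∧ v i = 0 ∧ v j = 1 := fun y => y.2
  choose u v hu hv hui huj hvi hvj using hch
  have hinj : Function.Injective (fun y : S => ((fun k : K => u y k.1, fun k : K => v y k.1,
      fun (k : K) (l : Fin n) => y.1 l k.1) : (K → F) × (K → F) × (K → Fin n → F))) := by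
    intro y z h
    simp only [Prod.mk.injEq] at h
    obtain ⟨h1, h2, h3⟩ := h
    have hue : u y = u z := by
      funext k
      by_cases hki : k = i
      · rw [hki, hui, hui]
      by_cases hkj : k = j
      · rw [hkj, huj, huj]
      exact congrFun h1 ⟨k, hki, hkj⟩
    have hve : v y = v z := by
      funext k
      by_cases hki : k = i
      · rw [hki, hvi, hvi]
      by_cases hkj : k = j
      · rw [hkj, hvj, hvj]
      exact congrFun h2 ⟨k, hki, hkj⟩
    have hD : ∀ l k, k ≠ i → k ≠ j → y.1 l k = z.1 l k := fun l k hki hkj =>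
      congrFun (congrFun h3 ⟨k, hki, hkj⟩) l
    have hi : ∀ l, y.1 l i = z.1 l i := by
      intro l
      have e1 := congrFun (hu y) l
      have e2 := congrFun (hu z) l
      rw [← hue, ← e1] at e2
      simp only [Matrix.mulVec, dotProduct] at e2
      rw [← sub_eq_zero, ← Finset.sum_sub_distrib, Finset.sum_eq_single i] at e2
      · rw [hui, mul_one, mul_one, sub_eq_zero] at e2
        exact e2.symm
      · intro k _ hki
        by_cases hkj : k = j
        · rw [hkj, huj]; simp
        · rw [hD l k hki hkj]; simp
      · simp
    have hj : ∀ l, y.1 l j = z.1 l j := by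
      intro l
      have e1 := congrFun (hv y) l
      have e2 := congrFun (hv z) l
      rw [← hve, ← e1] at e2
      simp only [Matrix.mulVec, dotProduct] at e2
      rw [← sub_eq_zero, ← Finset.sum_sub_distrib, Finset.sum_eq_single j] at e2
      · rw [hvj, mul_one, mul_one, sub_eq_zero] at e2
        exact e2.symm
      · intro k _ hkj
        by_cases hki : k = i
        · rw [hki, hvi]; simp
        · rw [hD l k hki hkj]; simp
      · simp
    apply Subtype.ext
    apply Subtype.ext
    ext l k
    by_cases hki : k = i
    · rw [hki]; exact hi l
    by_cases hkj : k = j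
    · rw [hkj]; exact hj l
    exact hD l k hki hkj
  have h := Nat.card_le_card_of_injective _ hinj
  rw [Nat.card_coe_set_eq] at h
  refine h.trans (le_of_eq ?_)
  rw [Nat.card_eq_fintype_card]
  simp only [Fintype.card_prod, Fintype.card_fun, hK, Fintype.card_fin]
  rw [← pow_mul, ← pow_add, ← pow_add]
  congr 1
  ring

theorem p12_rk {F : Type} [Field F] [Fintype F] {n : ℕ} (hn : 2 ≤ n) :
    Fintype.card F * {y : Matrix.SpecialLinearGroup (Fin n) F | ∃ lam : F,
      2 ≤ Module.finrank F (LinearMap.ker ((Matrix.toLin' (y : Matrix (Fin n) (Fin n) F) : Module.End F (Fin n → F)) - algebraMap F _ lam))}.ncard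
      ≤ (n^2 * 2^n) * Nat.card (Matrix.SpecialLinearGroup (Fin n) F) := by
  classical
  let S : F × Fin n × Fin n → Set (Matrix.SpecialLinearGroup (Fin n) F) := fun p =>
    {y | p.2.1 ≠ p.2.2 ∧ ∃ u v : Fin n → F,
      (y : Matrix (Fin n) (Fin n) F).mulVec u = p.1 • u ∧ (y : Matrix (Fin n) (Fin n) F).mulVec v = p.1 • v ∧
      u p.2.1 = 1 ∧ u p.2.2 = 0 ∧ v p.2.1 = 0 ∧ v p.2.2 = 1}
  have hS : ∀ p, (S p).ncard ≤ Fintype.card F ^ ((n+2)*(n-2)) := by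
    intro p
    by_cases hp : p.2.1 = p.2.2
    · have : S p = ∅ := by ext y; simp [S, hp]
      rw [this]; simp
    · refine le_trans (Set.ncard_le_ncard ?_ (Set.toFinite _)) (p12_B (F := F) hn p.1 p.2.1 p.2.2 hp)
      intro y hy
      exact hy.2
  have hsub : {y : Matrix.SpecialLinearGroup (Fin n) F | ∃ lam : F,
      2 ≤ Module.finrank F (LinearMap.ker ((Matrix.toLin' (y : Matrix (Fin n) (Fin n) F) : Module.End F (Fin n → F)) - algebraMap F _ lam))} ⊆ ⋃ p, S p := by
    rintro y ⟨lam, h⟩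
    obtain ⟨i, j, hij, u, hu, v, hv, h1⟩ := p12_ker _ h
    refine Set.mem_iUnion.2 ⟨(lam, i, j), hij, u, v, ?_, ?_, h1⟩
    · rw [LinearMap.mem_ker, LinearMap.sub_apply, sub_eq_zero] at hu
      simpa using hu
    · rw [LinearMap.mem_ker, LinearMap.sub_apply, sub_eq_zero] at hv
      simpa using hv
  have h1 := Set.ncard_le_ncard hsub (Set.toFinite _)
  have h3 := Set.ncard_iUnion_le_of_fintype S
  have h4 : ∑ p, (S p).ncard ≤ Fintype.card F * (n*n) * Fintype.card F ^ ((n+2)*(n-2)) := by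
    refine (Finset.sum_le_sum (fun p _ => hS p)).trans ?_
    simp
  have h5 := p8_low (F := F) (n := n) (by omega)
  have hq : 2 ≤ Fintype.card F := Fintype.one_lt_card
  exact p12_ar _ n _ _ hn hq h5 (h1.trans (h3.trans h4))

theorem stmt_5 :
    ∀ n : ℕ, 2 ≤ n →
      ∃ C : ℝ, 0 < C ∧
        ∀ (F : Type) [Field F] [Fintype F],
          ∃ x₁ x₂ : Matrix.SpecialLinearGroup (Fin n) F,
            orderOf x₁ = (Fintype.card F ^ n - 1) / (Fintype.card F - 1) ∧
            orderOf x₂ = Fintype.card F ^ (n - 1) - 1 ∧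
            (Nat.card {y : Matrix.SpecialLinearGroup (Fin n) F //
                InvGen x₁ y ∨ InvGen x₂ y} : ℝ) ≥
              (1 - C / Fintype.card F) *
                Nat.card (Matrix.SpecialLinearGroup (Fin n) F) := by
  intro n hn
  set Q : ℕ := ((16*n^3)^(n^2)).factorial + 4 with hQ
  set A : ℕ := n^2 + 1 + n^2 * 2^n with hA
  refine ⟨(Q + A : ℕ), by positivity, ?_⟩
  intro F _ _
  obtain ⟨x₁, ho1, hirr1, hord1⟩ := p11_x1 F n hn
  obtain ⟨x₂, ho2, hx2⟩ := p11_x2 F n hn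
  refine ⟨x₁, x₂, ho1, ho2, ?_⟩
  have hq : 2 ≤ Fintype.card F := Fintype.one_lt_card
  have hqR : (0:ℝ) < Fintype.card F := by exact_mod_cast (by omega : 0 < Fintype.card F)
  by_cases hbig : Fintype.card F < Q
  · have h1 : (1 - ((Q + A : ℕ) : ℝ) / Fintype.card F) ≤ 0 := by
      rw [sub_nonpos, le_div_iff₀ hqR, one_mul]
      exact_mod_cast (by omega : Fintype.card F ≤ Q + A)
    refine le_trans (mul_nonpos_of_nonpos_of_nonneg h1 (Nat.cast_nonneg _)) (Nat.cast_nonneg _)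
  push Not at hbig
  obtain ⟨f, a, hf, hfd, hch, hcop, hord2⟩ := hx2 (by omega)
  have hthr : ((16*n^3)^(n^2)).factorial < Fintype.card F := by omega
  let B1 := {y : Matrix.SpecialLinearGroup (Fin n) F | (y : Matrix (Fin n) (Fin n) F).trace = 0}
  let B2 := {y : Matrix.SpecialLinearGroup (Fin n) F | ∃ lam : F,
      2 ≤ Module.finrank F (LinearMap.ker ((Matrix.toLin' (y : Matrix (Fin n) (Fin n) F) : Module.End F (Fin n → F)) - algebraMap F _ lam))}
  let Gd := {y : Matrix.SpecialLinearGroup (Fin n) F | InvGen x₁ y ∨ InvGen x₂ y}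
  have hcov : (Set.univ : Set (Matrix.SpecialLinearGroup (Fin n) F)) ⊆ Gd ∪ (B1 ∪ B2) := by
    intro y _
    by_contra hy
    simp only [Set.mem_union, not_or] at hy
    obtain ⟨hg, hb1, hb2⟩ := hy
    apply hg
    have htr : (y : Matrix (Fin n) (Fin n) F).trace ≠ 0 := hb1
    by_cases hv : ∀ (lam : F) (v : Fin n → F), Matrix.toLin' (y : Matrix (Fin n) (Fin n) F) v = lam • v → v = 0
    · right
      exact p10_B hn x₂ y hthr f a hf hfd hch hcop hord2 htr hv
    · left
      push Not at hv
      obtain ⟨lam, v, hyv, hv0⟩ := hv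
      refine p10_A hn x₁ y hthr hirr1 hord1 htr lam v hv0 hyv ?_
      by_contra hk
      exact hb2 ⟨lam, by omega⟩
  have c1 := Set.ncard_le_ncard hcov (Set.toFinite _)
  have c2 := Set.ncard_union_le Gd (B1 ∪ B2)
  have c3 := Set.ncard_union_le B1 B2
  have c4 : Fintype.card F * B1.ncard ≤ (n^2+1) * Nat.card (Matrix.SpecialLinearGroup (Fin n) F) := p12_tr hn
  have c5 : Fintype.card F * B2.ncard ≤ (n^2*2^n) * Nat.card (Matrix.SpecialLinearGroup (Fin n) F) := p12_rk hn
  rw [Set.ncard_univ] at c1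
  have hG : Nat.card {y : Matrix.SpecialLinearGroup (Fin n) F // InvGen x₁ y ∨ InvGen x₂ y} = Gd.ncard :=
    Nat.card_coe_set_eq Gd
  rw [hG]
  generalize Nat.card (Matrix.SpecialLinearGroup (Fin n) F) = N at *
  generalize Gd.ncard = g at *
  generalize B1.ncard = b1 at *
  generalize B2.ncard = b2 at *
  have c6 : N ≤ g + (b1 + b2) := by omega
  have c7 : Fintype.card F * N ≤ Fintype.card F * g + (Q + A) * N := by
    calc Fintype.card F * N ≤ Fintype.card F * (g + (b1 + b2)) := Nat.mul_le_mul_left _ c6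
      _ = Fintype.card F * g + (Fintype.card F * b1 + Fintype.card F * b2) := by ring
      _ ≤ Fintype.card F * g + A * N := by
        rw [hA, add_mul (n^2+1)]; omega
      _ ≤ _ := by rw [add_mul Q]; omega
  have c8 : (Fintype.card F : ℝ) * N ≤ Fintype.card F * g + ((Q + A : ℕ) : ℝ) * N := by exact_mod_cast c7
  have c9 : (1 - ((Q + A : ℕ) : ℝ) / Fintype.card F) * N = (Fintype.card F * N - ((Q + A : ℕ) : ℝ) * N) / Fintype.card F := by
    field_simp
  rw [ge_iff_le, c9, div_le_iff₀ hqR]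
  linarith
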